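/- arXiv:2301.06317 — 5 statements merged into one kernel-verified Lean document; each statement's English description precedes it below -/
import Mathlib

section
/- For every nonnegative integer k, the function z ↦ (ψ(z)² − ψ'(z))/Γ(z) (z real, z not a nonpositive integer) tends to 2·(-1)^(k-1)·k!·(H_k − γ) as z tends to -k through the punctured neighborhood of -k in ℝ, where H_k − γ = ψ(k+1). -/
/-!
Let `f = 1/Γ`, which is smooth on all of `ℝ` because it is the restriction of an entire function.
Away from the zeros of `f` one has `ψ = -f'/f`, hence `ψ' = -f''/f + (f'/f)²` and
`(ψ² - ψ')/Γ = (f''/f) * f = f''`. The limit at `-k` is therefore `f''(-k)`. It is computed by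
differentiating `f z = z * f (z + 1)` twice: `f'(z) = f(z+1) + z f'(z+1)` and
`f''(z) = 2 f'(z+1) + z f''(z+1)`, which by induction on `k` give `f'(-k) = (-1)^k k!` and then
`f''(-k)`, starting from `f'(1) = γ`.
-/

open Filter Topology

/-- The digamma function `ψ(z) = Γ'(z)/Γ(z)` on the reals. -/
noncomputable def psi (z : ℝ) : ℝ := deriv Real.Gamma z / Real.Gamma z

/-- The harmonic number `H_n = ∑_{k=1}^n 1/k`. -/
noncomputable def H (n : ℕ) : ℝ := ∑ i ∈ Finset.range n, (1 : ℝ) / (i + 1)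

/-- The reciprocal `1/Γ` on the reals; it takes the correct value `0` at the poles of `Γ`, where
Mathlib's `Real.Gamma` is `0`. -/
noncomputable def recipGamma (z : ℝ) : ℝ := (Real.Gamma z)⁻¹

lemma recipGamma_contDiff : ContDiff ℝ 2 recipGamma := by
  have h : ContDiff ℂ 2 (fun s : ℂ => (Complex.Gamma s)⁻¹) :=
    Complex.differentiable_one_div_Gamma.contDiff
  have h2 : recipGamma = fun x : ℝ => ((Complex.Gamma (x : ℂ))⁻¹).re := by
    funext x
    rw [Complex.Gamma_ofReal, ← Complex.ofReal_inv, Complex.ofReal_re, recipGamma]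
  rw [h2]
  exact h.real_of_complex

lemma recipGamma_differentiable : Differentiable ℝ recipGamma :=
  recipGamma_contDiff.differentiable (by norm_num)

lemma recipGamma_contDiff_deriv : ContDiff ℝ 1 (deriv recipGamma) :=
  (contDiff_succ_iff_deriv (n := 1)).1 recipGamma_contDiff |>.2.2

lemma recipGamma_differentiable_deriv : Differentiable ℝ (deriv recipGamma) :=
  recipGamma_contDiff_deriv.differentiable (by norm_num)

lemma recipGamma_eq (z : ℝ) : recipGamma z = z * recipGamma (z + 1) := by
  by_cases hz : z = 0
  · simp [hz, recipGamma, Real.Gamma_zero]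
  · rw [recipGamma, recipGamma, Real.Gamma_add_one hz]
    field_simp

lemma deriv_recipGamma_eq (z : ℝ) :
    deriv recipGamma z = recipGamma (z + 1) + z * deriv recipGamma (z + 1) := by
  have h := (hasDerivAt_id z).mul
    ((recipGamma_differentiable (z + 1)).hasDerivAt.comp_add_const z 1)
  have h2 : HasDerivAt recipGamma _ z :=
    h.congr_of_eventuallyEq (Eventually.of_forall recipGamma_eq)
  simpa using h2.deriv

lemma deriv_deriv_recipGamma_eq (z : ℝ) :
    deriv (deriv recipGamma) z
      = 2 * deriv recipGamma (z + 1) + z * deriv (deriv recipGamma) (z + 1) := by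
  have h := ((recipGamma_differentiable (z + 1)).hasDerivAt.comp_add_const z 1).add
    ((hasDerivAt_id z).mul
      ((recipGamma_differentiable_deriv (z + 1)).hasDerivAt.comp_add_const z 1))
  have h2 : HasDerivAt (deriv recipGamma) _ z :=
    h.congr_of_eventuallyEq (Eventually.of_forall deriv_recipGamma_eq)
  rw [h2.deriv]
  simp only [id]
  ring

lemma recipGamma_neg_nat (k : ℕ) : recipGamma (-(k : ℝ)) = 0 := by
  simp [recipGamma, Real.Gamma_neg_nat_eq_zero]

lemma deriv_recipGamma_neg_nat (k : ℕ) :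
    deriv recipGamma (-(k : ℝ)) = (-1) ^ k * Nat.factorial k := by
  induction k with
  | zero =>
    rw [deriv_recipGamma_eq]
    simp [recipGamma]
  | succ k ih =>
    have e : -((k + 1 : ℕ) : ℝ) + 1 = -(k : ℝ) := by push_cast; ring
    rw [deriv_recipGamma_eq, e, ih, recipGamma_neg_nat, Nat.factorial_succ]
    push_cast
    ring

lemma deriv_recipGamma_one : deriv recipGamma 1 = Real.eulerMascheroniConstant := by
  have h := Real.hasDerivAt_Gamma_one.inv (by simp)
  have h2 : HasDerivAt recipGamma _ 1 := h
  rw [h2.deriv]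
  simp

lemma deriv_deriv_recipGamma_neg_nat (k : ℕ) :
    deriv (deriv recipGamma) (-(k : ℝ)) = 2 * (-1 : ℝ) ^ (k + 1) * Nat.factorial k *
        (H k - Real.eulerMascheroniConstant) := by
  induction k with
  | zero =>
    rw [deriv_deriv_recipGamma_eq]
    simp [deriv_recipGamma_one, H]
  | succ k ih =>
    have e : -((k + 1 : ℕ) : ℝ) + 1 = -(k : ℝ) := by push_cast; ring
    have hH : H (k + 1) = H k + 1 / ((k : ℝ) + 1) := Finset.sum_range_succ _ _
    have hk : (k : ℝ) + 1 ≠ 0 := by positivity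
    rw [deriv_deriv_recipGamma_eq, e, ih, deriv_recipGamma_neg_nat, Nat.factorial_succ, hH]
    push_cast
    field_simp
    ring

lemma psi_eq {w : ℝ} (hw : recipGamma w ≠ 0) : psi w = -deriv recipGamma w / recipGamma w := by
  have hG : Real.Gamma = fun x => (recipGamma x)⁻¹ := by
    funext x
    simp [recipGamma]
  rw [psi, hG, ((recipGamma_differentiable w).hasDerivAt.fun_inv hw).deriv]
  field_simp

/-- Off the poles of `Γ`, the expression `(ψ² - ψ')/Γ` is the second derivative of `1/Γ`. -/
lemma psi_expr_eq {z : ℝ} (hz : recipGamma z ≠ 0) :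
    (psi z ^ 2 - deriv psi z) / Real.Gamma z = deriv (deriv recipGamma) z := by
  have hev : psi =ᶠ[𝓝 z] fun w => -deriv recipGamma w / recipGamma w := by
    filter_upwards [recipGamma_differentiable.continuous.continuousAt.eventually_ne hz] with w hw
    exact psi_eq hw
  have h := ((recipGamma_differentiable_deriv z).hasDerivAt.fun_neg.fun_div
    (recipGamma_differentiable z).hasDerivAt hz).congr_of_eventuallyEq hev
  have hG : Real.Gamma z = (recipGamma z)⁻¹ := by simp [recipGamma]
  rw [h.deriv, psi_eq hz, hG]
  field_simp
  ring

/-- For every nonnegative integer `k`, the function `z ↦ (ψ(z)² − ψ'(z))/Γ(z)` tends to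
`2·(-1)^(k-1)·k!·(H_k − γ)` as `z → -k` through punctured neighborhoods of `-k` in `ℝ`. -/
theorem psi_sq_sub_deriv_div_Gamma_tendsto (k : ℕ) :
    Tendsto (fun z : ℝ => (psi z ^ 2 - deriv psi z) / Real.Gamma z) (𝓝[≠] (-(k : ℝ)))
      (𝓝 (2 * (-1 : ℝ) ^ (k + 1) * Nat.factorial k *
        (H k - Real.eulerMascheroniConstant))) := by
  rw [← deriv_deriv_recipGamma_neg_nat]
  have hc : Continuous (deriv (deriv recipGamma)) :=
    recipGamma_contDiff_deriv.continuous_deriv le_rfl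
  refine ((hc.tendsto _).mono_left nhdsWithin_le_nhds).congr' ?_
  have hne : ∀ᶠ z in 𝓝[≠] (-(k : ℝ)), recipGamma z ≠ 0 := by
    -- `-k` is an isolated zero of `1/Γ`, since it is a simple one.
    refine (recipGamma_differentiable (-(k : ℝ))).hasDerivAt.eventually_ne ?_
    rw [deriv_recipGamma_neg_nat]
    positivity
  filter_upwards [hne] with z hz
  exact (psi_expr_eq hz).symm
end

section
/- For every nonnegative integer k, the function z ↦ (ψ(z)³ − 3ψ(z)ψ'(z) + ψ''(z))/Γ(z) (z real, z not a nonpositive integer) tends to 3·(-1)^k·k!·(π²/6 + H_k^{(2)} − (H_k − γ)²) as z tends to -k through the punctured neighborhood of -k in ℝ. -/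
/-!
The function `f = 1/Γ` is smooth on all of `ℝ`, and `ψ = -f'/f`. Differentiating gives
`ψ³ - 3ψψ' + ψ'' = -f'''/f` wherever `f ≠ 0`, so the function in the theorem equals `-f'''` near
`-k` (away from `-k` itself), and its limit is `-f'''(-k)`.

The derivatives of `f` at `-k` are found by induction on `k` from `f(x) = x f(x+1)`, whose
derivatives express `f'(x), f''(x), f'''(x)` through the derivatives of `f` at `x + 1`. The base
case needs `f(1) = 1`, `f'(1) = γ` and `f''(1) = γ² - π²/6`; the last value is the only place
where `π²/6` enters, and comes from comparing third derivatives at `0` in the reflection formula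
`f(x) f(1-x) = sin(πx)/π`.
-/

open Filter Topology

/-- The generalized harmonic number `H_n^{(2)} = ∑_{k=1}^n 1/k²`. -/
noncomputable def H2 (n : ℕ) : ℝ := ∑ i ∈ Finset.range n, (1 : ℝ) / (i + 1) ^ 2

/-- The reciprocal Gamma function on `ℝ`. The junk value `Γ(-k) = 0` in Mathlib makes `(Γ(-k))⁻¹`
equal to the correct value `0` at the poles. -/
noncomputable def rGamma (x : ℝ) : ℝ := (Real.Gamma x)⁻¹

lemma contDiff_rGamma : ContDiff ℝ 4 rGamma := by
  have h1 : ContDiff ℝ 4 (fun s : ℂ => (Complex.Gamma s)⁻¹) :=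
    (Complex.differentiable_one_div_Gamma.contDiff (n := 4)).restrict_scalars ℝ
  have h2 : rGamma = fun x : ℝ => Complex.reCLM ((Complex.Gamma (Complex.ofRealCLM x))⁻¹) := by
    funext x
    simp only [rGamma, Complex.ofRealCLM_apply, Complex.reCLM_apply, Complex.Gamma_ofReal]
    rw [← Complex.ofReal_inv, Complex.ofReal_re]
  rw [h2]
  exact Complex.reCLM.contDiff.comp (h1.comp Complex.ofRealCLM.contDiff)

lemma hasDerivAt_iteratedDeriv_rGamma (n : ℕ) (hn : n < 4) (x : ℝ) :
    HasDerivAt (iteratedDeriv n rGamma) (iteratedDeriv (n + 1) rGamma x) x := by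
  rw [iteratedDeriv_succ]
  exact ((contDiff_rGamma.differentiable_iteratedDeriv n (by exact_mod_cast hn)) x).hasDerivAt

lemma hasDerivAt_rGamma (x : ℝ) : HasDerivAt rGamma (iteratedDeriv 1 rGamma x) x := by
  simpa using hasDerivAt_iteratedDeriv_rGamma 0 (by norm_num) x

lemma rGamma_eq_mul (x : ℝ) : rGamma x = x * rGamma (x + 1) := by
  unfold rGamma
  rcases eq_or_ne x 0 with rfl | hx
  · simp
  · rw [Real.Gamma_add_one hx, mul_inv, ← mul_assoc, mul_inv_cancel₀ hx, one_mul]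

lemma iteratedDeriv_one_rGamma_eq (x : ℝ) :
    iteratedDeriv 1 rGamma x = rGamma (x + 1) + x * iteratedDeriv 1 rGamma (x + 1) := by
  have h := (hasDerivAt_id x).mul ((hasDerivAt_rGamma (x + 1)).comp_add_const x 1)
  have h2 : HasDerivAt rGamma _ x :=
    h.congr_of_eventuallyEq (Eventually.of_forall rGamma_eq_mul)
  rw [(hasDerivAt_rGamma x).unique h2]
  simp

/-- Leibniz rule for the derivatives of `x ↦ x f(x+1)`, with `f = 1/Γ`, in inductive form. -/
lemma iteratedDeriv_rGamma_step (n : ℕ) (hn : n + 1 < 4)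
    (ih : ∀ x : ℝ, iteratedDeriv (n + 1) rGamma x =
      (n + 1 : ℝ) * iteratedDeriv n rGamma (x + 1) + x * iteratedDeriv (n + 1) rGamma (x + 1))
    (x : ℝ) :
    iteratedDeriv (n + 2) rGamma x =
      (n + 2 : ℝ) * iteratedDeriv (n + 1) rGamma (x + 1)
        + x * iteratedDeriv (n + 2) rGamma (x + 1) := by
  have h := (((hasDerivAt_iteratedDeriv_rGamma n (by omega) (x + 1)).comp_add_const x 1).const_mul
    (n + 1 : ℝ)).add ((hasDerivAt_id x).mul
      ((hasDerivAt_iteratedDeriv_rGamma (n + 1) hn (x + 1)).comp_add_const x 1))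
  have h2 : HasDerivAt (iteratedDeriv (n + 1) rGamma) _ x :=
    h.congr_of_eventuallyEq (Eventually.of_forall ih)
  rw [(hasDerivAt_iteratedDeriv_rGamma (n + 1) hn x).unique h2]
  simp
  ring

lemma iteratedDeriv_two_rGamma_eq (x : ℝ) :
    iteratedDeriv 2 rGamma x =
      2 * iteratedDeriv 1 rGamma (x + 1) + x * iteratedDeriv 2 rGamma (x + 1) := by
  have := iteratedDeriv_rGamma_step 0 (by norm_num)
    (fun x => by simpa using iteratedDeriv_one_rGamma_eq x) x
  simpa using this

lemma iteratedDeriv_three_rGamma_eq (x : ℝ) :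
    iteratedDeriv 3 rGamma x =
      3 * iteratedDeriv 2 rGamma (x + 1) + x * iteratedDeriv 3 rGamma (x + 1) := by
  have := iteratedDeriv_rGamma_step 1 (by norm_num)
    (fun x => by
      have := iteratedDeriv_two_rGamma_eq x
      push_cast
      linarith) x
  push_cast at this
  linarith

lemma rGamma_one : rGamma 1 = 1 := by simp [rGamma]

lemma iteratedDeriv_one_rGamma_one :
    iteratedDeriv 1 rGamma 1 = Real.eulerMascheroniConstant := by
  have h : HasDerivAt rGamma _ 1 := Real.hasDerivAt_Gamma_one.fun_inv (by simp)
  rw [(hasDerivAt_rGamma 1).unique h]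
  simp

lemma rGamma_mul_rGamma_one_sub (x : ℝ) :
    rGamma x * rGamma (1 - x) = Real.sin (Real.pi * x) / Real.pi := by
  unfold rGamma
  rw [← mul_inv, Real.Gamma_mul_Gamma_one_sub, inv_div]

/-- The value `(1/Γ)''(1) = γ² - π²/6`, read off from the third derivative at `0` of the
reflection formula. -/
lemma iteratedDeriv_two_rGamma_one :
    iteratedDeriv 2 rGamma 1 = Real.eulerMascheroniConstant ^ 2 - Real.pi ^ 2 / 6 := by
  set f := rGamma
  set f1 := iteratedDeriv 1 rGamma
  set f2 := iteratedDeriv 2 rGamma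
  set f3 := iteratedDeriv 3 rGamma
  have d0 : ∀ x, HasDerivAt f (f1 x) x := hasDerivAt_rGamma
  have d1 : ∀ x, HasDerivAt f1 (f2 x) x := hasDerivAt_iteratedDeriv_rGamma 1 (by norm_num)
  have d2 : ∀ x, HasDerivAt f2 (f3 x) x := hasDerivAt_iteratedDeriv_rGamma 2 (by norm_num)
  have r0 : ∀ x, HasDerivAt (fun x => f (1 - x)) (-f1 (1 - x)) x :=
    fun x => (d0 (1 - x)).comp_const_sub 1 x
  have r1 : ∀ x, HasDerivAt (fun x => f1 (1 - x)) (-f2 (1 - x)) x :=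
    fun x => (d1 (1 - x)).comp_const_sub 1 x
  have r2 : ∀ x, HasDerivAt (fun x => f2 (1 - x)) (-f3 (1 - x)) x :=
    fun x => (d2 (1 - x)).comp_const_sub 1 x
  have hlin : ∀ x : ℝ, HasDerivAt (fun x => Real.pi * x) Real.pi x := fun x => by
    simpa using (hasDerivAt_id x).const_mul Real.pi
  have hpi := Real.pi_ne_zero
  have e1 : ∀ x, f1 x * f (1 - x) - f x * f1 (1 - x) = Real.cos (Real.pi * x) := fun x => by
    have h := (d0 x).fun_mul (r0 x)
    have h' := ((hlin x).sin.div_const Real.pi).congr_of_eventuallyEq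
      (Eventually.of_forall rGamma_mul_rGamma_one_sub)
    have := h.unique h'
    rw [mul_div_cancel_right₀ _ hpi] at this
    linarith
  have e2 : ∀ x, f2 x * f (1 - x) - 2 * (f1 x * f1 (1 - x)) + f x * f2 (1 - x)
      = -Real.sin (Real.pi * x) * Real.pi := fun x => by
    have h := ((d1 x).fun_mul (r0 x)).fun_sub ((d0 x).fun_mul (r1 x))
    have h' := (hlin x).cos.congr_of_eventuallyEq (Eventually.of_forall e1)
    have := h.unique h'
    linarith
  have e3 : f3 0 * f (1 - 0) - 3 * (f2 0 * f1 (1 - 0)) + 3 * (f1 0 * f2 (1 - 0))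
      - f 0 * f3 (1 - 0) = -Real.pi ^ 2 := by
    have h := (((d2 0).fun_mul (r0 0)).fun_sub
      (((d1 0).fun_mul (r1 0)).const_mul 2)).fun_add ((d0 0).fun_mul (r2 0))
    have h' := ((hlin 0).sin.fun_neg.mul_const Real.pi).congr_of_eventuallyEq
      (Eventually.of_forall e2)
    have := h.unique h'
    simp only [mul_zero, Real.cos_zero, one_mul] at this
    linarith
  have a0 : f 0 = 0 := by simp [f, rGamma]
  have a1 : f1 0 = 1 := by
    have := iteratedDeriv_one_rGamma_eq 0
    rwa [zero_add, rGamma_one, zero_mul, add_zero] at this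
  have a2 : f2 0 = 2 * Real.eulerMascheroniConstant := by
    have := iteratedDeriv_two_rGamma_eq 0
    rwa [zero_add, iteratedDeriv_one_rGamma_one, zero_mul, add_zero] at this
  have a3 : f3 0 = 3 * f2 1 := by
    have := iteratedDeriv_three_rGamma_eq 0
    rwa [zero_add, zero_mul, add_zero] at this
  have b0 : f 1 = 1 := rGamma_one
  have b1 : f1 1 = Real.eulerMascheroniConstant := iteratedDeriv_one_rGamma_one
  rw [sub_zero, a0, a1, a2, a3, b0, b1] at e3
  linarith

lemma rGamma_neg_nat (k : ℕ) : rGamma (-(k : ℝ)) = 0 := by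
  simp [rGamma, Real.Gamma_neg_nat_eq_zero]

/-- The first three derivatives of `1/Γ` at `-k`. -/
lemma iteratedDeriv_rGamma_neg_nat (k : ℕ) :
    iteratedDeriv 1 rGamma (-(k : ℝ)) = (-1) ^ k * Nat.factorial k ∧
    iteratedDeriv 2 rGamma (-(k : ℝ)) =
      -2 * (-1) ^ k * Nat.factorial k * (H k - Real.eulerMascheroniConstant) ∧
    iteratedDeriv 3 rGamma (-(k : ℝ)) =
      -3 * (-1) ^ k * Nat.factorial k *
        (Real.pi ^ 2 / 6 + H2 k - (H k - Real.eulerMascheroniConstant) ^ 2) := by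
  induction k with
  | zero =>
    have h1 := iteratedDeriv_one_rGamma_eq 0
    have h2 := iteratedDeriv_two_rGamma_eq 0
    have h3 := iteratedDeriv_three_rGamma_eq 0
    rw [zero_add] at h1 h2 h3
    rw [rGamma_one] at h1
    rw [iteratedDeriv_one_rGamma_one] at h2
    rw [iteratedDeriv_two_rGamma_one] at h3
    simp only [Nat.cast_zero, neg_zero, h1, h2, h3, H, H2, Finset.range_zero, Finset.sum_empty,
      pow_zero, Nat.factorial_zero, Nat.cast_one]
    refine ⟨by ring, by ring, by ring⟩
  | succ k ih =>
    obtain ⟨i1, i2, i3⟩ := ih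
    have hx : (-((k + 1 : ℕ) : ℝ)) + 1 = -(k : ℝ) := by push_cast; ring
    have h1 := iteratedDeriv_one_rGamma_eq (-((k + 1 : ℕ) : ℝ))
    have h2 := iteratedDeriv_two_rGamma_eq (-((k + 1 : ℕ) : ℝ))
    have h3 := iteratedDeriv_three_rGamma_eq (-((k + 1 : ℕ) : ℝ))
    rw [hx, i1, rGamma_neg_nat] at h1
    rw [hx, i1, i2] at h2
    rw [hx, i2, i3] at h3
    have hk : (k : ℝ) + 1 ≠ 0 := by positivity
    have hH : H (k + 1) = H k + 1 / ((k : ℝ) + 1) := Finset.sum_range_succ _ _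
    have hH2 : H2 (k + 1) = H2 k + 1 / ((k : ℝ) + 1) ^ 2 := Finset.sum_range_succ _ _
    rw [h1, h2, h3, hH, hH2, Nat.factorial_succ, pow_succ]
    push_cast
    refine ⟨by ring, ?_, ?_⟩
    · field_simp
      ring
    · field_simp
      ring

/-- `ψ = -f'/f` for `f = 1/Γ`. This holds at the poles of `Γ` too, both sides being `0` there by
the convention for division by zero. -/
lemma psi_eq_s2 : psi = fun z => -iteratedDeriv 1 rGamma z / rGamma z := by
  funext z
  by_cases hz : rGamma z = 0
  · have hG : Real.Gamma z = 0 := inv_eq_zero.mp hz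
    simp [psi, hz, hG]
  · have hG : Real.Gamma = fun x => (rGamma x)⁻¹ := by funext x; simp [rGamma]
    have hd := (hasDerivAt_rGamma z).fun_inv hz
    rw [← hG] at hd
    rw [psi, hd.deriv, hG]
    field_simp

lemma hasDerivAt_psi {z : ℝ} (hz : rGamma z ≠ 0) :
    HasDerivAt psi (-iteratedDeriv 2 rGamma z / rGamma z
      + (iteratedDeriv 1 rGamma z / rGamma z) ^ 2) z := by
  rw [psi_eq_s2]
  have h1 : HasDerivAt (iteratedDeriv 1 rGamma) (iteratedDeriv 2 rGamma z) z :=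
    hasDerivAt_iteratedDeriv_rGamma 1 (by norm_num) z
  refine (h1.fun_neg.fun_div (hasDerivAt_rGamma z) hz).congr_deriv ?_
  field_simp
  ring

lemma hasDerivAt_deriv_psi {z : ℝ} (hz : rGamma z ≠ 0) :
    HasDerivAt (deriv psi) (-iteratedDeriv 3 rGamma z / rGamma z
      + 3 * iteratedDeriv 2 rGamma z * iteratedDeriv 1 rGamma z / rGamma z ^ 2
      - 2 * (iteratedDeriv 1 rGamma z / rGamma z) ^ 3) z := by
  have hev : ∀ᶠ x in 𝓝 z, rGamma x ≠ 0 := (hasDerivAt_rGamma z).continuousAt.eventually_ne hz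
  have h1 : HasDerivAt (iteratedDeriv 1 rGamma) (iteratedDeriv 2 rGamma z) z :=
    hasDerivAt_iteratedDeriv_rGamma 1 (by norm_num) z
  have h2 : HasDerivAt (iteratedDeriv 2 rGamma) (iteratedDeriv 3 rGamma z) z :=
    hasDerivAt_iteratedDeriv_rGamma 2 (by norm_num) z
  have h0 := hasDerivAt_rGamma z
  have h := (h2.fun_neg.fun_div h0 hz).fun_add ((h1.fun_div h0 hz).fun_pow 2)
  refine (h.congr_of_eventuallyEq
    (hev.mono fun x hx => (hasDerivAt_psi hx).deriv)).congr_deriv ?_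
  push_cast
  field_simp
  ring

/-- For every nonnegative integer `k`, the function
`z ↦ (ψ(z)³ − 3ψ(z)ψ'(z) + ψ''(z))/Γ(z)` tends to
`3·(-1)^k·k!·(π²/6 + H_k^{(2)} − (H_k − γ)²)` as `z → -k`
through punctured neighborhoods of `-k` in `ℝ`. -/
theorem psi_cubed_div_Gamma_tendsto (k : ℕ) :
    Tendsto
      (fun z : ℝ =>
        (psi z ^ 3 - 3 * psi z * deriv psi z + deriv (deriv psi) z) / Real.Gamma z)
      (𝓝[≠] (-(k : ℝ)))
      (𝓝 (3 * (-1 : ℝ) ^ k * Nat.factorial k *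
        (Real.pi ^ 2 / 6 + H2 k - (H k - Real.eulerMascheroniConstant) ^ 2))) := by
  obtain ⟨k1, -, k3⟩ := iteratedDeriv_rGamma_neg_nat k
  -- `-k` is a simple zero of `1/Γ`, hence isolated.
  have hne : ∀ᶠ z in 𝓝[≠] (-(k : ℝ)), rGamma z ≠ 0 := by
    refine (hasDerivAt_rGamma (-(k : ℝ))).eventually_ne ?_
    rw [k1]
    have := Nat.factorial_ne_zero k
    positivity
  have hlim : Tendsto (fun z => -iteratedDeriv 3 rGamma z) (𝓝[≠] (-(k : ℝ)))
      (𝓝 (-iteratedDeriv 3 rGamma (-(k : ℝ)))) :=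
    ((hasDerivAt_iteratedDeriv_rGamma 3 (by norm_num) _).continuousAt.neg.tendsto).mono_left
      nhdsWithin_le_nhds
  have hval : 3 * (-1 : ℝ) ^ k * Nat.factorial k *
      (Real.pi ^ 2 / 6 + H2 k - (H k - Real.eulerMascheroniConstant) ^ 2)
      = -iteratedDeriv 3 rGamma (-(k : ℝ)) := by
    rw [k3]
    ring
  rw [hval]
  refine hlim.congr' (hne.mono fun z hz => ?_)
  dsimp only
  rw [(hasDerivAt_psi hz).deriv, (hasDerivAt_deriv_psi hz).deriv, psi_eq_s2, div_eq_mul_inv,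
    show (Real.Gamma z)⁻¹ = rGamma z from rfl]
  field_simp
  ring
end

section
/- Let x be a real number with x > -1 and let m ≥ 1 be an integer. Then ∑_{k=1}^∞ (-1)^(k-1)/k^m · C(x,k) = ((-1)^m/m!) · (d^m/dz^m)[Γ(x+1)Γ(z)/Γ(z+x)] evaluated at z = 1, i.e. the m-th derivative at 1 of the real function z ↦ Γ(x+1)Γ(z)/Γ(z+x). -/
/-!
The function being differentiated is a linear factor times a beta function: for `x > -1` and `z > 0`,
`Γ(x+1) Γ(z) / Γ(z+x) = (z + x) B(z, x+1)` with `B(z, x+1) = ∫₀¹ t^(z-1) (1-t)^x dt`. Integrating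
the binomial series of `(1-t)^x` term by term gives the partial fraction expansion
`B(z, x+1) = ∑ₖ (-1)^k C(x,k) / (z+k)` (`hasSum_beta`). Working with the parameter `x + 1 > 0`
rather than `x` keeps the integral convergent on the whole range `x > -1`, and the expansion
converges absolutely by `summable_abs_rbinom_div`.

Expanding each fraction around `z = 1` (`hasSum_beta_taylor`), the `m`-th Taylor coefficient of
`((1 + x) + (z - 1)) B(z, x+1)` is, for `m ≥ 1`,
`(-1)^m ∑ₖ (-1)^k ((1+x) C(x,k) / (k+1)^(m+1) - C(x,k) / (k+1)^m)`,
and the recurrence `(k+1) C(x,k+1) = (x-k) C(x,k)` turns the summand into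
`(-1)^k C(x,k+1) / (k+1)^m`.
-/

/-- Generalized binomial coefficient `C(x,k) = Γ(x+1)/(Γ(k+1)·Γ(x−k+1))` for real `x`. -/
noncomputable def rbinom (x : ℝ) (k : ℕ) : ℝ :=
  Real.Gamma (x + 1) / (Real.Gamma (k + 1) * Real.Gamma (x - k + 1))

open Real MeasureTheory Filter Topology

lemma rbinom_zero {x : ℝ} (hx : -1 < x) : rbinom x 0 = 1 := by
  have : Gamma (x + 1) ≠ 0 := (Gamma_pos_of_pos (by linarith)).ne'
  simp [rbinom, this]

lemma rbinom_succ (x : ℝ) (k : ℕ) :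
    rbinom x (k + 1) = rbinom x k * (x - k) / (k + 1) := by
  have hk : (k + 1 : ℝ) ≠ 0 := by positivity
  have h1 : Gamma ((k : ℝ) + 1 + 1) = (k + 1) * Gamma (k + 1) := Gamma_add_one hk
  rcases eq_or_ne (x - k) 0 with h | h
  · -- Here `Γ (x - k) = Γ 0 = 0` by convention, and both sides vanish.
    simp [rbinom, show x - ((k : ℝ) + 1) + 1 = x - k by ring, h]
  · simp only [rbinom, Nat.cast_add, Nat.cast_one, h1,
      show x - ((k : ℝ) + 1) + 1 = x - k by ring, Gamma_add_one h]
    field_simp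

lemma rbinom_eq_choose {x : ℝ} (hx : -1 < x) (k : ℕ) : rbinom x k = Ring.choose x k := by
  induction k with
  | zero => simp [rbinom_zero hx]
  | succ k ih =>
    have h0 := Ring.descPochhammer_eq_factorial_smul_choose x k
    have h1 := Ring.descPochhammer_eq_factorial_smul_choose x (k + 1)
    rw [descPochhammer_succ_right, Polynomial.smeval_mul, h0] at h1
    simp only [Polynomial.smeval_sub, Polynomial.smeval_X, Polynomial.smeval_natCast, pow_one,
      pow_zero, nsmul_eq_mul, Nat.factorial_succ, Nat.cast_mul, Nat.cast_add, Nat.cast_one,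
      mul_one] at h1
    have hf : (k.factorial : ℝ) ≠ 0 := by positivity
    rw [rbinom_succ, ih, div_eq_iff (by positivity)]
    apply mul_left_cancel₀ hf
    linear_combination h1

/-- The terms `|C(x,k)| / (k+1)` are summable: once `k ≥ x` the recurrence gives
`|C(x,k)| - |C(x,k+1)| = (x+1) |C(x,k)| / (k+1)`, so the partial sums telescope. -/
lemma summable_abs_rbinom_div {x : ℝ} (hx : -1 < x) :
    Summable fun k : ℕ => |rbinom x k| / (k + 1) := by
  obtain ⟨N, hN⟩ := exists_nat_ge x
  have hpos : 0 < x + 1 := by linarith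
  rw [← summable_nat_add_iff N]
  refine summable_of_sum_range_le (c := |rbinom x N| / (x + 1)) (fun n => by positivity) ?_
  intro n
  have key : ∀ n : ℕ, ∑ i ∈ Finset.range n, |rbinom x (i + N)| / ((i + N : ℕ) + 1)
      = (|rbinom x N| - |rbinom x (n + N)|) / (x + 1) := by
    intro n
    induction n with
    | zero => simp
    | succ n ih =>
      have h : x ≤ ((n + N : ℕ) : ℝ) := hN.trans (by push_cast; linarith [n.cast_nonneg (α := ℝ)])
      have hp : (0 : ℝ) < ((n + N : ℕ) : ℝ) + 1 := by positivity
      rw [Finset.sum_range_succ, ih, show n + 1 + N = n + N + 1 by ring, rbinom_succ, abs_div,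
        abs_mul, abs_of_nonpos (sub_nonpos.2 h), abs_of_pos hp]
      field_simp
      ring
  rw [key]
  gcongr
  linarith [abs_nonneg (rbinom x (n + N))]

/-- The binomial series of `(1 - t) ^ x`. -/
lemma hasSum_rbinom_mul_pow {x t : ℝ} (hx : -1 < x) (h0 : 0 < t) (h1 : t < 1) :
    HasSum (fun k : ℕ => (-1) ^ k * rbinom x k * t ^ k) ((1 - t) ^ x) := by
  have := (one_add_rpow_hasFPowerSeriesOnBall_zero (a := x)).hasSum (y := -t) (by
    rw [← ENNReal.ofReal_one, Metric.eball_ofReal]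
    simp [abs_of_pos h0, h1])
  rw [zero_add, ← sub_eq_add_neg] at this
  convert! this using 2 with k
  rw [binomialSeries_apply, List.ofFn_const, List.prod_replicate, rbinom_eq_choose hx, neg_pow t,
    smul_eq_mul]
  ring

/-- Euler's beta integral with real parameters. -/
lemma integral_beta {x z : ℝ} (hx : -1 < x) (hz : 0 < z) :
    ∫ t in Set.Ioo (0 : ℝ) 1, t ^ (z - 1) * (1 - t) ^ x
      = Gamma z * Gamma (x + 1) / Gamma (z + x + 1) := by
  have h := ProbabilityTheory.beta_eq_betaIntegralReal z (x + 1) hz (by linarith)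
  rw [ProbabilityTheory.beta, ← add_assoc] at h
  rw [h, Complex.betaIntegral, intervalIntegral.integral_of_le zero_le_one,
    integral_Ioc_eq_integral_Ioo]
  rw [← Complex.ofReal_re (∫ t in Set.Ioo (0 : ℝ) 1, t ^ (z - 1) * (1 - t) ^ x),
    ← integral_complex_ofReal]
  congr 1
  refine setIntegral_congr_fun measurableSet_Ioo fun t ht => ?_
  have h1 : (0 : ℝ) ≤ 1 - t := by linarith [ht.2]
  simp only [Complex.ofReal_mul, Complex.ofReal_cpow ht.1.le, Complex.ofReal_cpow h1]
  push_cast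
  ring_nf

lemma integrableOn_rpow_Ioo {s : ℝ} (hs : 0 < s) :
    IntegrableOn (fun t : ℝ => t ^ (s - 1)) (Set.Ioo 0 1) :=
  (intervalIntegral.integrableOn_Ioo_rpow_iff one_pos).2 (by linarith)

lemma integral_rpow_Ioo {s : ℝ} (hs : 0 < s) :
    ∫ t in Set.Ioo (0 : ℝ) 1, t ^ (s - 1) = 1 / s := by
  rw [← integral_Ioc_eq_integral_Ioo, ← intervalIntegral.integral_of_le zero_le_one,
    integral_rpow (Or.inl (by linarith))]
  simp [zero_rpow hs.ne']

/-- The partial fraction expansion of the beta function in its first variable, obtained by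
integrating the binomial series of `(1 - t) ^ x` against `t ^ (z - 1)`. -/
lemma hasSum_beta {x z : ℝ} (hx : -1 < x) (hz : 0 < z) :
    HasSum (fun k : ℕ => (-1) ^ k * rbinom x k / (z + k))
      (Gamma z * Gamma (x + 1) / Gamma (z + x + 1)) := by
  set F : ℕ → ℝ → ℝ := fun k t => (-1) ^ k * rbinom x k * t ^ (z + k - 1) with hF
  have hzk : ∀ k : ℕ, 0 < z + k := fun k => by positivity
  have hint : ∀ k, Integrable (F k) (volume.restrict (Set.Ioo 0 1)) := fun k =>
    (integrableOn_rpow_Ioo (hzk k)).const_mul _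
  have hnorm : ∀ k, ∫ t in Set.Ioo (0 : ℝ) 1, ‖F k t‖ = |rbinom x k| / (z + k) := by
    intro k
    rw [div_eq_mul_one_div, ← integral_rpow_Ioo (hzk k), ← integral_const_mul]
    refine setIntegral_congr_fun measurableSet_Ioo fun t ht => ?_
    simp [hF, abs_of_nonneg (rpow_nonneg ht.1.le _)]
  have hsum : Summable fun k => ∫ t in Set.Ioo (0 : ℝ) 1, ‖F k t‖ := by
    simp_rw [hnorm]
    -- `1 / (z + k)` is at most `max 1 (1 / z)` times `1 / (k + 1)`.
    refine Summable.of_nonneg_of_le (fun k => div_nonneg (abs_nonneg _) (hzk k).le) (fun k => ?_)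
      ((summable_abs_rbinom_div hx).mul_left (max 1 (1 / z)))
    rw [mul_div_assoc', div_le_div_iff₀ (hzk k) (by positivity)]
    have h1 : (k : ℝ) + 1 ≤ max 1 (1 / z) * (z + k) := by
      have ha : 1 ≤ max 1 (1 / z) * z := by
        calc (1 : ℝ) = 1 / z * z := by field_simp
          _ ≤ _ := by gcongr; exact le_max_right _ _
      have hb : (k : ℝ) ≤ max 1 (1 / z) * k :=
        le_mul_of_one_le_left k.cast_nonneg (le_max_left _ _)
      linarith
    calc |rbinom x k| * (k + 1) ≤ |rbinom x k| * (max 1 (1 / z) * (z + k)) := by gcongr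
      _ = _ := by ring
  have h := hasSum_integral_of_summable_integral_norm hint hsum
  have hR : ∫ t in Set.Ioo (0 : ℝ) 1, ∑' k, F k t
      = Gamma z * Gamma (x + 1) / Gamma (z + x + 1) := by
    rw [← integral_beta hx hz]
    refine setIntegral_congr_fun measurableSet_Ioo fun t ht => ?_
    refine HasSum.tsum_eq ?_
    convert! (hasSum_rbinom_mul_pow hx ht.1 ht.2).mul_left (t ^ (z - 1)) using 2 with k
    simp only [hF]
    rw [show z + k - 1 = z - 1 + k by ring, rpow_add ht.1, rpow_natCast]
    ring
  rw [hR] at h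
  convert! h using 2 with k
  simp only [hF]
  rw [integral_const_mul, integral_rpow_Ioo (hzk k)]
  ring

/-- The sum `∑ₖ (-1)^k C(x,k) / (k+1)^n`. For `n = j + 1` it is `(-1)^j` times the `j`-th Taylor
coefficient at `z = 1` of the beta function `B(z, x+1)`. -/
noncomputable def betaCoeff (x : ℝ) (n : ℕ) : ℝ :=
  ∑' k : ℕ, (-1) ^ k * rbinom x k / (k + 1 : ℝ) ^ n

lemma summable_betaCoeff {x : ℝ} (hx : -1 < x) {n : ℕ} (hn : 1 ≤ n) :
    Summable fun k : ℕ => (-1) ^ k * rbinom x k / (k + 1 : ℝ) ^ n := by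
  refine Summable.of_norm_bounded (summable_abs_rbinom_div hx) fun k => ?_
  have h1 : (1 : ℝ) ≤ k + 1 := by linarith [k.cast_nonneg (α := ℝ)]
  have h2 : |(k + 1 : ℝ)| = k + 1 := abs_of_pos (by positivity)
  simp only [norm_div, norm_mul, norm_pow, norm_neg, norm_one, one_pow, one_mul, norm_eq_abs, h2]
  gcongr
  exact le_self_pow₀ h1 (by omega)

/-- The Taylor series of the beta function at `z = 1`: each `1 / (1 + w + k)` is expanded into a
geometric series and the summations are exchanged. -/
lemma hasSum_beta_taylor {x w : ℝ} (hx : -1 < x) (hw : |w| < 1) :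
    HasSum (fun j : ℕ => w ^ j * ((-1) ^ j * betaCoeff x (j + 1)))
      (Gamma (1 + w) * Gamma (x + 1) / Gamma (1 + w + x + 1)) := by
  set F : ℕ × ℕ → ℝ := fun p =>
    (-1) ^ p.1 * rbinom x p.1 / (p.1 + 1) * (-w / (p.1 + 1)) ^ p.2 with hF
  have hsum : Summable F := by
    have hg : Summable fun j : ℕ => |w| ^ j := summable_geometric_of_lt_one (abs_nonneg w) hw
    refine Summable.of_norm_bounded ((summable_abs_rbinom_div hx).mul_of_nonneg hg
      (fun k => by positivity) (fun j => by positivity)) ?_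
    rintro ⟨k, j⟩
    have h1 : (1 : ℝ) ≤ k + 1 := by linarith [k.cast_nonneg (α := ℝ)]
    have h2 : |(k + 1 : ℝ)| = k + 1 := abs_of_pos (by positivity)
    simp only [hF, norm_div, norm_mul, norm_pow, norm_neg, norm_one, one_pow, one_mul,
      norm_eq_abs, h2]
    gcongr
    exact div_le_self (abs_nonneg w) h1
  have hrow : ∀ k : ℕ, HasSum (fun j => F (k, j)) ((-1) ^ k * rbinom x k / (1 + w + k)) := by
    intro k
    have h1 : (1 : ℝ) ≤ k + 1 := by linarith [k.cast_nonneg (α := ℝ)]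
    have h3 : 0 < 1 + w + k := by linarith [(abs_lt.1 hw).1]
    have h2 : |-w / (k + 1 : ℝ)| < 1 := by
      rw [abs_div, abs_neg, abs_of_pos (by positivity : (0 : ℝ) < k + 1)]
      exact (div_le_self (abs_nonneg w) h1).trans_lt hw
    convert! (hasSum_geometric_of_abs_lt_one h2).mul_left ((-1) ^ k * rbinom x k / (k + 1)) using 1
    have h4 : (k : ℝ) + 1 + w ≠ 0 := by linarith
    have h5 : 1 - -w / (k + 1 : ℝ) = (1 + w + k) / (k + 1) := by field_simp; ring
    rw [h5]
    field_simp
  have hcol : ∀ j : ℕ, HasSum (fun k => F (k, j)) (w ^ j * ((-1) ^ j * betaCoeff x (j + 1))) := by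
    intro j
    convert! (summable_betaCoeff hx (Nat.le_add_left 1 j)).hasSum.mul_left (w ^ j * (-1) ^ j)
      using 1
    · ext k
      simp only [hF]
      rw [div_pow, neg_pow w]
      field_simp
      ring
    · rw [betaCoeff, mul_assoc]
  have h1 := hsum.hasSum.prod_fiberwise hrow
  have h2 := hsum.prod_symm.hasSum.prod_fiberwise (g := fun j => _) hcol
  have h3 := hasSum_beta hx (z := 1 + w) (by linarith [(abs_lt.1 hw).1])
  have h4 : ∑' p : ℕ × ℕ, F p.swap = ∑' p, F p := (Equiv.prodComm ℕ ℕ).tsum_eq F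
  rw [h4, h1.unique h3] at h2
  exact h2

/-- For real `x > -1` and an integer `m ≥ 1`,
`∑_{k=1}^∞ (-1)^(k-1)/k^m · C(x,k)
  = ((-1)^m/m!) · (d^m/dz^m)[Γ(x+1)Γ(z)/Γ(z+x)]|_{z=1}`. -/
theorem sum_alt_binom_eq (x : ℝ) (hx : -1 < x) (m : ℕ) (hm : 1 ≤ m) :
    (∑' k : ℕ, (-1 : ℝ) ^ k / (k + 1 : ℝ) ^ m * rbinom x (k + 1)) =
      (-1 : ℝ) ^ m / Nat.factorial m *
        iteratedDeriv m (fun z : ℝ => Real.Gamma (x + 1) * Real.Gamma z / Real.Gamma (z + x))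
          1 := by
  obtain ⟨n, rfl⟩ : ∃ n, m = n + 1 := ⟨m - 1, by omega⟩
  set f : ℝ → ℝ := fun z => Gamma (x + 1) * Gamma z / Gamma (z + x) with hf
  set c : ℕ → ℝ := fun j => (1 + x) * ((-1) ^ j * betaCoeff x (j + 1)) +
    (if j = 0 then 0 else (-1) ^ (j - 1) * betaCoeff x j) with hc
  -- `f z = (z + x) B(z, x+1)` and `z + x = (1 + x) + (z - 1)`, so these are its Taylor coefficients.
  have hps : HasFPowerSeriesAt f (FormalMultilinearSeries.ofScalars ℝ c) 1 := by
    rw [hasFPowerSeriesAt_iff]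
    filter_upwards [Metric.ball_mem_nhds (0 : ℝ) one_pos] with w hw
    have hw' : |w| < 1 := by simpa using hw
    have h := hasSum_beta_taylor hx hw'
    set B := Gamma (1 + w) * Gamma (x + 1) / Gamma (1 + w + x + 1) with hB
    have hfB : f (1 + w) = (1 + x) * B + w * B := by
      rcases eq_or_ne (1 + w + x) 0 with h0 | h0
      · -- Here `Γ 0 = 0` by convention makes `f (1 + w)` vanish, as does the factor `1 + w + x`.
        simp only [hf, h0, Gamma_zero, div_zero]
        linear_combination -B * h0
      · have h1 : Gamma (1 + w + x + 1) ≠ 0 :=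
          (Gamma_pos_of_pos (by linarith [(abs_lt.1 hw').1])).ne'
        rw [Gamma_add_one h0] at h1 hB
        have h2 := right_ne_zero_of_mul h1
        simp only [hf, hB]
        field_simp
        ring
    rw [hfB]
    have hshift : HasSum (fun j : ℕ => w ^ j * (if j = 0 then 0 else
        (-1) ^ (j - 1) * betaCoeff x j)) (w * B) := by
      rw [← hasSum_nat_add_iff' 1]
      simp only [Finset.sum_range_one, if_true, mul_zero, sub_zero]
      convert! h.mul_left w using 2 with j
      simp
      ring
    convert! (h.mul_left (1 + x)).add hshift using 2 with j
    simp only [FormalMultilinearSeries.coeff_ofScalars, hc, smul_eq_mul]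
    ring
  have heq := hps.analyticAt.hasFPowerSeriesAt.eq_formalMultilinearSeries hps
  have hcoeff : iteratedDeriv (n + 1) f 1 / (n + 1).factorial = c (n + 1) := by
    simpa [FormalMultilinearSeries.coeff_ofScalars] using
      congrArg (fun p => p.coeff (n + 1)) heq
  rw [div_mul_eq_mul_div, mul_div_assoc, hcoeff]
  have hs : HasSum _ ((1 + x) * betaCoeff x (n + 2) - betaCoeff x (n + 1)) :=
    ((summable_betaCoeff hx (n := n + 2) (by omega)).hasSum.mul_left (1 + x)).sub
    (summable_betaCoeff hx (n := n + 1) (by omega)).hasSum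
  -- By the recurrence, `C(x,k+1) = (1 + x) C(x,k) / (k + 1) - C(x,k)`.
  have hL : ∀ k : ℕ, (-1 : ℝ) ^ k / (k + 1 : ℝ) ^ (n + 1) * rbinom x (k + 1) =
      (1 + x) * ((-1) ^ k * rbinom x k / (k + 1 : ℝ) ^ (n + 2)) -
        (-1) ^ k * rbinom x k / (k + 1 : ℝ) ^ (n + 1) := by
    intro k
    rw [rbinom_succ]
    field_simp
    ring
  simp_rw [hL]
  rw [hs.tsum_eq]
  have hsq : ((-1 : ℝ) ^ n) ^ 2 = 1 := by rw [← pow_mul, mul_comm, pow_mul]; simp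
  simp only [hc, Nat.add_sub_cancel, if_neg (Nat.succ_ne_zero n), pow_succ (-1 : ℝ) n]
  linear_combination (-(1 + x) * betaCoeff x (n + 2) + betaCoeff x (n + 1)) * hsq
end

section
/- Let m ≥ 1 and n ≥ 0 be integers. Then ∑_{k=0}^∞ H_k/((n+k+1)^(m+1)·C(n+k,k)) = ((-1)^n/2)·∑_{k=1}^n (-1)^(k-1)/k^m · C(n,k)·(H_{n−k}² + H_{n−k}^{(2)} − H_n^{(2)} − H_n²) − ((-1)^(m+n)/(2·m!))·D_2 + ((-1)^(m+n)·H_n/m!)·D_1, where for a = 1,2, D_a denotes the a-th derivative at x = n of the real function x ↦ (the m-th derivative at z = 1 of z ↦ Γ(x+1)Γ(z)/Γ(z+x)). -/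
/-! ### The generalized binomial coefficients and their derivatives -/

/-- The polynomial `(-1)^j C(x,j) = ∏_{i<j} (i - x)/(i + 1)` in the real variable `x`. -/
noncomputable def bc (x : ℝ) : ℕ → ℝ
  | 0 => 1
  | j + 1 => bc x j * ((j - x) / (j + 1))

/-- The first `x`-derivative of `bc x j`, through the differentiated recurrence. -/
noncomputable def bc1 (x : ℝ) : ℕ → ℝ
  | 0 => 0
  | j + 1 => bc1 x j * ((j - x) / (j + 1)) - bc x j / (j + 1)

/-- The second `x`-derivative of `bc x j`. -/
noncomputable def bc2 (x : ℝ) : ℕ → ℝ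
  | 0 => 0
  | j + 1 => bc2 x j * ((j - x) / (j + 1)) - 2 * (bc1 x j / (j + 1))

lemma hasDerivAt_bc (j : ℕ) (x : ℝ) : HasDerivAt (fun y => bc y j) (bc1 x j) x := by
  induction j with
  | zero => exact hasDerivAt_const x (1 : ℝ)
  | succ j ih =>
    have h : HasDerivAt (fun y : ℝ => ((j : ℝ) - y) / (j + 1)) (-1 / (j + 1)) x :=
      ((hasDerivAt_id x).const_sub (j : ℝ)).div_const _
    convert! ih.mul h using 1
    simp only [bc1]; ring

lemma hasDerivAt_bc1 (j : ℕ) (x : ℝ) : HasDerivAt (fun y => bc1 y j) (bc2 x j) x := by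
  induction j with
  | zero => exact hasDerivAt_const x (0 : ℝ)
  | succ j ih =>
    have h : HasDerivAt (fun y : ℝ => ((j : ℝ) - y) / (j + 1)) (-1 / (j + 1)) x :=
      ((hasDerivAt_id x).const_sub (j : ℝ)).div_const _
    convert! (ih.mul h).sub ((hasDerivAt_bc j x).div_const ((j : ℝ) + 1)) using 1
    simp only [bc2]; ring

lemma bc_eq_choose (x : ℝ) (j : ℕ) : bc x j = (-1) ^ j * Ring.choose x j := by
  have key : ∀ j, Ring.choose x j = ((j.factorial : ℝ))⁻¹ * (descPochhammer ℝ j).eval x := by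
    intro j
    simp only [Ring.choose_eq_smul, Polynomial.descPochhammer_smeval_eq_ascPochhammer,
      Polynomial.ascPochhammer_smeval_cast, Polynomial.ascPochhammer_smeval_eq_eval,
      descPochhammer_eval_eq_ascPochhammer, smul_eq_mul]
  rw [key]
  induction j with
  | zero => simp [bc]
  | succ j ih =>
    rw [bc, ih, descPochhammer_succ_eval, Nat.factorial_succ]
    have : (j : ℝ) + 1 ≠ 0 := by positivity
    have : (j.factorial : ℝ) ≠ 0 := by positivity
    push_cast
    field_simp
    ring

/-! ### Uniform decay of the coefficients -/

/-- The majorant `(j+1)^(-1/2)` for `bc`, `bc1` and `bc2`: summable once divided by `j + 1`. -/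
noncomputable def wt (j : ℕ) : ℝ := 1 / √((j : ℝ) + 1)

lemma wt_pos (j : ℕ) : 0 < wt j := by unfold wt; positivity

/-- The margin `1/4` absorbs both the factor `(j - x)/(j + 1) ≤ (j + 1/8)/(j + 1)` and the
inhomogeneous terms of the recurrences for `bc1` and `bc2`. -/
lemma wt_step (j : ℕ) : wt j * ((j + 1 / 4) / (j + 1)) ≤ wt (j + 1) := by
  unfold wt
  have hj : (0 : ℝ) ≤ j := by positivity
  push_cast
  rw [div_mul_div_comm, div_le_div_iff₀ (by positivity) (by positivity), one_mul, one_mul]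
  apply le_of_sq_le_sq _ (by positivity)
  rw [mul_pow, mul_pow, Real.sq_sqrt (by positivity), Real.sq_sqrt (by positivity)]
  nlinarith

lemma wt_anti {i j : ℕ} (h : i ≤ j) : wt j ≤ wt i := by
  unfold wt
  have : (i : ℝ) ≤ j := by exact_mod_cast h
  gcongr

lemma summable_wt {m : ℕ} (hm : 1 ≤ m) : Summable fun j : ℕ => wt j / ((j : ℝ) + 1) ^ m := by
  have h0 : Summable fun j : ℕ => ((((j + 1 : ℕ) : ℝ)) ^ (3 / 2 : ℝ))⁻¹ :=
    (summable_nat_add_iff 1).2 (Real.summable_nat_rpow_inv.2 (by norm_num))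
  refine h0.of_nonneg_of_le (fun j => by have := wt_pos j; positivity) fun j => ?_
  have hj : (0 : ℝ) < (j : ℝ) + 1 := by positivity
  have : ((((j + 1 : ℕ) : ℝ)) ^ (3 / 2 : ℝ))⁻¹ = wt j / ((j : ℝ) + 1) ^ 1 := by
    unfold wt
    push_cast
    rw [Real.sqrt_eq_rpow, show (3 / 2 : ℝ) = 1 / 2 + 1 by norm_num, Real.rpow_add hj,
      Real.rpow_one, pow_one]
    field_simp
  rw [this]
  have := (wt_pos j).le
  have h1 : (1 : ℝ) ≤ (j : ℝ) + 1 := by linarith [(Nat.cast_nonneg j : (0 : ℝ) ≤ j)]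
  gcongr

lemma exists_bound_initial (n N : ℕ) : ∃ A : ℝ, 0 ≤ A ∧ ∀ j ≤ N, ∀ x : ℝ, |x - n| ≤ 1 / 8 →
    |bc x j| ≤ A ∧ |bc1 x j| ≤ A ∧ |bc2 x j| ≤ A := by
  induction N with
  | zero =>
    refine ⟨1, zero_le_one, fun j hj x _ => ?_⟩
    obtain rfl : j = 0 := by omega
    simp [bc, bc1, bc2]
  | succ N ih =>
    obtain ⟨A, hA, h⟩ := ih
    refine ⟨A * (n + 4), by positivity, fun j hj x hx => ?_⟩
    have hn : (0 : ℝ) ≤ n := by positivity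
    rcases Nat.lt_or_ge N j with hlt | hge
    · obtain rfl : j = N + 1 := by omega
      obtain ⟨h0, h1, h2⟩ := h N le_rfl x hx
      have hN : (0 : ℝ) ≤ N := by positivity
      have hq : |((N : ℝ) - x) / (N + 1)| ≤ n + 2 := by
        rw [abs_div, abs_of_pos (by positivity : (0 : ℝ) < N + 1), div_le_iff₀ (by positivity)]
        rw [abs_le] at hx ⊢
        constructor <;> nlinarith
      have hd : ∀ y : ℝ, |y| ≤ A → |y / ((N : ℝ) + 1)| ≤ A := by
        intro y hy
        rw [abs_div, abs_of_pos (by positivity : (0 : ℝ) < N + 1), div_le_iff₀ (by positivity)]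
        nlinarith
      have hm : ∀ y : ℝ, |y| ≤ A → |y * (((N : ℝ) - x) / (N + 1))| ≤ A * (n + 2) := by
        intro y hy
        rw [abs_mul]
        gcongr
      refine ⟨?_, ?_, ?_⟩
      · exact (hm _ h0).trans (by nlinarith)
      · refine (abs_sub _ _).trans ?_
        linarith [hm _ h1, hd _ h0]
      · refine (abs_sub _ _).trans ?_
        rw [abs_mul 2, abs_two]
        linarith [hm _ h2, hd _ h1]
    · obtain ⟨h0, h1, h2⟩ := h j hge x hx
      have : A ≤ A * (n + 4) := by nlinarith
      exact ⟨h0.trans this, h1.trans this, h2.trans this⟩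

/-- The constants grow by a factor `16` per derivative, so that the inhomogeneous term costs only
`1/16` (for `bc1`) or `2/16` (for `bc2`) of the bound being propagated. The induction starts at
`j = n + 1`, from where on `(j - x)/(j + 1)` is nonnegative. -/
lemma exists_bound (n : ℕ) : ∃ A : ℝ, 0 ≤ A ∧ ∀ (j : ℕ) (x : ℝ), |x - n| ≤ 1 / 8 →
    |bc x j| ≤ A * wt j ∧ |bc1 x j| ≤ 16 * A * wt j ∧ |bc2 x j| ≤ 256 * A * wt j := by
  obtain ⟨A, hA, h⟩ := exists_bound_initial n (n + 1)
  set B := A / wt (n + 1) with hB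
  have hB0 : 0 ≤ B := div_nonneg hA (wt_pos _).le
  have small : ∀ j ≤ n + 1, ∀ x : ℝ, |x - n| ≤ 1 / 8 →
      |bc x j| ≤ B * wt j ∧ |bc1 x j| ≤ 16 * B * wt j ∧ |bc2 x j| ≤ 256 * B * wt j := by
    intro j hj x hx
    obtain ⟨h0, h1, h2⟩ := h j hj x hx
    have hAB : A ≤ B * wt j := by
      rw [hB, div_mul_eq_mul_div, le_div_iff₀ (wt_pos _)]
      exact mul_le_mul_of_nonneg_left (wt_anti hj) hA
    refine ⟨by linarith, by linarith, by linarith⟩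
  refine ⟨B, hB0, fun j x hx => ?_⟩
  rcases le_total j (n + 1) with hj | hj
  · exact small j hj x hx
  induction j, hj using Nat.le_induction with
  | base => exact small _ le_rfl x hx
  | succ j hj ih =>
    obtain ⟨h0, h1, h2⟩ := ih
    have hx' := abs_le.1 hx
    have hjn : (n : ℝ) + 1 ≤ j := by exact_mod_cast hj
    have hn : (0 : ℝ) ≤ n := by positivity
    have hj1 : (0 : ℝ) < (j : ℝ) + 1 := by linarith
    have hq0 : 0 ≤ ((j : ℝ) - x) / (j + 1) := div_nonneg (by linarith) hj1.le
    have hq : ((j : ℝ) - x) / (j + 1) ≤ (j + 1 / 8) / (j + 1) := by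
      gcongr; linarith
    have hs := wt_step j
    have hw := (wt_pos j).le
    have hm : ∀ y C : ℝ, |y| ≤ C * wt j →
        |y * (((j : ℝ) - x) / (j + 1))| ≤ C * wt j * ((j + 1 / 8) / (j + 1)) := by
      intro y C hy
      rw [abs_mul, abs_of_nonneg hq0]
      exact mul_le_mul hy hq hq0 ((abs_nonneg y).trans hy)
    have hd : ∀ y C : ℝ, |y| ≤ C * wt j → |y / ((j : ℝ) + 1)| ≤ C * wt j * (1 / (j + 1)) := by
      intro y C hy
      rw [abs_div, abs_of_pos hj1, mul_one_div]
      gcongr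
    have e1 : ((j : ℝ) + 1 / 4) / (j + 1) = (j + 1 / 8) / (j + 1) + 1 / 8 * (1 / (j + 1)) := by
      ring
    have hr : 0 ≤ B * wt j * (1 / ((j : ℝ) + 1)) := by positivity
    have hs' := mul_le_mul_of_nonneg_left hs hB0
    rw [e1] at hs'
    refine ⟨?_, ?_, ?_⟩
    · exact (hm _ _ h0).trans (by linarith)
    · refine (abs_sub _ _).trans ?_
      linarith [hm _ _ h1, hd _ _ h0]
    · refine (abs_sub _ _).trans ?_
      rw [abs_mul 2, abs_two]
      linarith [hm _ _ h2, hd _ _ h1]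

/-! ### Values at `x = n` -/

lemma H_succ (n : ℕ) : H (n + 1) = H n + 1 / ((n : ℝ) + 1) := by
  simp [H, Finset.sum_range_succ]

lemma H2_succ (n : ℕ) : H2 (n + 1) = H2 n + 1 / ((n : ℝ) + 1) ^ 2 := by
  simp [H2, Finset.sum_range_succ]

/-- The values at `x = n = d + j`, that is, for indices `j ≤ n`. -/
lemma bc_nat_le (d j : ℕ) :
    bc ((d + j : ℕ) : ℝ) j = (-1) ^ j * ((d + j).choose j : ℝ) ∧
    bc1 ((d + j : ℕ) : ℝ) j = (-1) ^ j * ((d + j).choose j : ℝ) * (H (d + j) - H d) ∧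
    bc2 ((d + j : ℕ) : ℝ) j = (-1) ^ j * ((d + j).choose j : ℝ) *
      ((H (d + j) - H d) ^ 2 - (H2 (d + j) - H2 d)) := by
  induction j generalizing d with
  | zero => simp [bc, bc1, bc2]
  | succ j ih =>
    obtain ⟨h0, h1, h2⟩ := ih (d + 1)
    have e : d + (j + 1) = d + 1 + j := by ring
    have hc : ((d + 1 + j).choose (j + 1) : ℝ) * (j + 1) = (d + 1 + j).choose j * (d + 1) := by
      have := Nat.choose_succ_right_eq (d + 1 + j) j
      rw [Nat.add_sub_cancel] at this
      exact_mod_cast this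
    have hj : (j : ℝ) + 1 ≠ 0 := by positivity
    have hd : (d : ℝ) + 1 ≠ 0 := by positivity
    have hc' : ((d + 1 + j).choose (j + 1) : ℝ) = (d + 1 + j).choose j * (d + 1) / (j + 1) := by
      field_simp; linarith
    have hx : ((j : ℝ) - ((d + 1 + j : ℕ) : ℝ)) / (j + 1) = -(d + 1) / (j + 1) := by
      push_cast; ring
    rw [e]
    simp only [bc, bc1, bc2, h0, h1, h2, hc', hx, H_succ d, H2_succ d]
    refine ⟨?_, ?_, ?_⟩ <;> · field_simp; ring

/-- The values at `x = n` for indices `n + k + 1 > n`: the coefficient has a simple zero there, and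
its derivatives produce the summands of the infinite series. -/
lemma bc_nat_gt (n k : ℕ) :
    bc (n : ℝ) (n + k + 1) = 0 ∧
    bc1 (n : ℝ) (n + k + 1) = (-1) ^ (n + 1) / ((n + k + 1) * ((n + k).choose k : ℝ)) ∧
    bc2 (n : ℝ) (n + k + 1) =
      2 * ((-1) ^ (n + 1) / ((n + k + 1) * ((n + k).choose k : ℝ))) * (H n - H k) := by
  induction k with
  | zero =>
    obtain ⟨h0, h1, h2⟩ := bc_nat_le 0 n
    simp only [zero_add, Nat.choose_self] at h0 h1 h2
    have hn : (n : ℝ) + 1 ≠ 0 := by positivity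
    have hH : H 0 = 0 := by simp [H]
    simp only [add_zero, bc, bc1, bc2, h0, h1, h2, hH]
    simp
    refine ⟨by field_simp; ring, by field_simp; ring⟩
  | succ k ih =>
    obtain ⟨h0, h1, h2⟩ := ih
    have e : n + (k + 1) + 1 = (n + k + 1) + 1 := by ring
    have hc : ((n + k + 1).choose (k + 1) : ℝ) * (k + 1) = (n + k + 1) * (n + k).choose k := by
      have := Nat.add_one_mul_choose_eq (n + k) k
      exact_mod_cast this.symm
    have hk : (k : ℝ) + 1 ≠ 0 := by positivity
    have hnk : (n : ℝ) + k + 1 ≠ 0 := by positivity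
    have hnk' : (n : ℝ) + k + 1 + 1 ≠ 0 := by positivity
    have hnk'' : (n : ℝ) + (k + 1) + 1 ≠ 0 := by positivity
    have hC : ((n + k).choose k : ℝ) ≠ 0 := by
      exact_mod_cast (Nat.choose_pos (Nat.le_add_left k n)).ne'
    have hc' : ((n + (k + 1)).choose (k + 1) : ℝ) = (n + k + 1) * (n + k).choose k / (k + 1) := by
      rw [← add_assoc]; field_simp; linarith
    rw [e]
    rw [bc, bc1, bc2, h0, h1, h2, hc', H_succ k]
    push_cast
    refine ⟨by simp, ?_, ?_⟩
    · field_simp; ring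
    · field_simp; ring

/-! ### The Gamma quotient as a series of partial fractions -/
open MeasureTheory Set in
/-- The Beta integral `∫₀¹ t^(z-1) (1-t)^x dt`, evaluated by integrating the binomial series of
`(1-t)^x` term by term. -/
lemma beta_hasSum {x : ℝ} (hx : 0 < x + 1) {z : ℝ} (hz : 0 < z)
    (hs : Summable fun j => |bc x j| / ((j : ℝ) + z)) :
    HasSum (fun j : ℕ => bc x j / (z + j))
      (Real.Gamma z * Real.Gamma (x + 1) / Real.Gamma (z + (x + 1))) := by
  have hB : Real.Gamma z * Real.Gamma (x + 1) / Real.Gamma (z + (x + 1)) =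
      ∫ t in Ioc (0 : ℝ) 1, t ^ (z - 1) * (1 - t) ^ x := by
    have h1 : ((Real.Gamma z * Real.Gamma (x + 1) / Real.Gamma (z + (x + 1)) : ℝ) : ℂ) =
        ((∫ t in Ioc (0 : ℝ) 1, t ^ (z - 1) * (1 - t) ^ x : ℝ) : ℂ) := by
      have h2 := Complex.betaIntegral_eq_Gamma_mul_div (z : ℂ) ((x + 1 : ℝ) : ℂ)
        (by simpa using hz) (by simpa using hx)
      rw [← Complex.ofReal_add, Complex.Gamma_ofReal, Complex.Gamma_ofReal,
        Complex.Gamma_ofReal] at h2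
      push_cast at h2 ⊢
      rw [← h2, Complex.betaIntegral, intervalIntegral.integral_of_le zero_le_one,
        ← integral_complex_ofReal]
      refine setIntegral_congr_fun measurableSet_Ioc fun t ht => ?_
      have ht1 : 0 ≤ 1 - t := by linarith [ht.2]
      push_cast
      rw [Complex.ofReal_cpow ht.1.le, Complex.ofReal_cpow ht1]
      push_cast
      simp
    exact_mod_cast h1
  have hint : ∀ j : ℕ, ∫ t in Ioc (0 : ℝ) 1, t ^ (z - 1 + j) = 1 / (z + j) := by
    intro j
    have hzj : 0 < z + j := by positivity
    rw [← intervalIntegral.integral_of_le zero_le_one,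
      integral_rpow (Or.inl (by linarith))]
    rw [show z - 1 + j + 1 = z + j by ring, Real.one_rpow, Real.zero_rpow hzj.ne', sub_zero]
  have hinteg : ∀ j : ℕ, IntegrableOn (fun t : ℝ => t ^ (z - 1 + j)) (Ioc (0 : ℝ) 1) := by
    intro j
    have hzj : 0 < z + j := by positivity
    rw [← intervalIntegrable_iff_integrableOn_Ioc_of_le zero_le_one]
    exact intervalIntegral.intervalIntegrable_rpow' (by linarith)
  have hsum := hasSum_integral_of_summable_integral_norm
    (μ := volume.restrict (Ioc (0 : ℝ) 1)) (F := fun (j : ℕ) t => bc x j * t ^ (z - 1 + j))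
    (fun j => (hinteg j).const_mul _) (by
      refine hs.congr fun j => ?_
      rw [setIntegral_congr_fun (g := fun t => |bc x j| * t ^ (z - 1 + j)) measurableSet_Ioc,
        integral_const_mul, hint, add_comm, mul_one_div]
      intro t ht
      simp only [norm_mul, Real.norm_eq_abs]
      rw [abs_of_nonneg (Real.rpow_nonneg ht.1.le _)])
  simp only [integral_const_mul, hint, mul_one_div] at hsum
  rw [hB]
  suffices heq : ∫ t in Ioc (0 : ℝ) 1, t ^ (z - 1) * (1 - t) ^ x =
      ∫ t in Ioc (0 : ℝ) 1, ∑' j : ℕ, bc x j * t ^ (z - 1 + j) by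
    rw [heq]; exact hsum
  -- the binomial series may diverge at the endpoint `t = 1`, a null set
  rw [integral_Ioc_eq_integral_Ioo, integral_Ioc_eq_integral_Ioo]
  refine setIntegral_congr_fun measurableSet_Ioo fun t ht => ?_
  have hb : HasSum (fun j : ℕ => bc x j * t ^ j) ((1 - t) ^ x) := by
    have := (Real.one_add_rpow_hasFPowerSeriesOnBall_zero (a := x)).hasSum (y := -t) (by
      simp [abs_of_pos ht.1, enorm_eq_nnnorm, ← NNReal.coe_lt_coe, ht.2])
    convert! this using 1
    · ext j
      rw [binomialSeries_apply, List.ofFn_const, List.prod_replicate, bc_eq_choose, smul_eq_mul,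
        neg_pow t]
      ring
    · simp [sub_eq_add_neg]
  rw [← hb.tsum_eq, ← tsum_mul_left]
  refine tsum_congr fun j => ?_
  rw [Real.rpow_add ht.1, Real.rpow_natCast]
  ring

lemma hasDerivAt_tsum_pow {a : ℕ → ℝ} {p : ℕ}
    (ha : Summable fun j : ℕ => |a j| / ((j : ℝ) + 1) ^ p) {z : ℝ} (hz : 1 / 2 < z) :
    HasDerivAt (fun w : ℝ => ∑' j : ℕ, a j / (w + j) ^ p)
      (-(p : ℝ) * ∑' j : ℕ, a j / (z + j) ^ (p + 1)) z := by
  rw [← tsum_mul_left]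
  have low : ∀ (j : ℕ) (w : ℝ), 1 / 2 < w → 1 / 2 * ((j : ℝ) + 1) ≤ w + j := by
    intro j w hw
    have : (0 : ℝ) ≤ j := by positivity
    linarith
  refine hasDerivAt_tsum_of_isPreconnected
    (g := fun (j : ℕ) (w : ℝ) => a j / (w + j) ^ p)
    (g' := fun (j : ℕ) (w : ℝ) => -(p : ℝ) * (a j / (w + j) ^ (p + 1)))
    (u := fun j : ℕ => p * 2 ^ (p + 1) * (|a j| / ((j : ℝ) + 1) ^ p))
    (ha.mul_left _) (isOpen_Ioi (a := (1 / 2 : ℝ))) isPreconnected_Ioi ?_ ?_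
    (y₀ := 1) (by norm_num) ?_ hz
  · intro j w hw
    have hw' : 1 / 2 < w := hw
    have hpos : 0 < w + j := by positivity
    have h1 : HasDerivAt (fun w : ℝ => w + j) 1 w := (hasDerivAt_id w).add_const _
    convert! ((hasDerivAt_const w (a j)).div (h1.pow p) (pow_pos hpos p).ne') using 1
    rcases p with _ | p
    · simp
    · simp
      field_simp
      ring
  · intro j w hw
    have hw' : 1 / 2 < w := hw
    have hpos : 0 < w + j := by positivity
    have h1 : (0 : ℝ) < (j : ℝ) + 1 := by positivity
    rw [Real.norm_eq_abs, abs_mul, abs_neg, abs_div, abs_of_nonneg (by positivity : (0 : ℝ) ≤ p),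
      abs_of_pos (by positivity : 0 < (w + j) ^ (p + 1)), mul_assoc]
    gcongr
    rw [mul_div_assoc', div_le_div_iff₀ (by positivity) (by positivity)]
    have h2 : ((j : ℝ) + 1) ^ p ≤ 2 ^ (p + 1) * (w + j) ^ (p + 1) := by
      rw [← mul_pow]
      have h3 : (j : ℝ) + 1 ≤ 2 * (w + j) := by linarith [low j w hw']
      refine le_trans ?_ (pow_le_pow_left₀ h1.le h3 (p + 1))
      refine pow_le_pow_right₀ ?_ (Nat.le_succ p)
      linarith [(Nat.cast_nonneg j : (0 : ℝ) ≤ j)]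
    calc |a j| * ((j : ℝ) + 1) ^ p ≤ |a j| * (2 ^ (p + 1) * (w + j) ^ (p + 1)) := by gcongr
      _ = _ := by ring
  · refine Summable.of_norm ?_
    refine ha.congr fun j => ?_
    rw [norm_div, Real.norm_eq_abs, norm_pow, Real.norm_eq_abs,
      abs_of_pos (by positivity : (0 : ℝ) < 1 + j), add_comm]

/-- For `p ≥ 1` the `p`-th `z`-derivative of `Γ(x+1)Γ(z)/Γ(z+x) = (z+x) B(z,x+1)` is
`(-1)^(p+1) p! ∑ (j+1) bc x (j+1) / (z+j)^(p+1)`, by induction on `p = m + 1`. The coefficient arises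
from `(j - x) bc x j = (j+1) bc x (j+1)`. -/
lemma iteratedDeriv_gamma {x A : ℝ} (hx : -(1 / 8) ≤ x)
    (hA : ∀ j, |bc x j| ≤ A * wt j) (m : ℕ) {z : ℝ} (hz : 1 / 2 < z) :
    iteratedDeriv (m + 1) (fun z : ℝ => Real.Gamma (x + 1) * Real.Gamma z / Real.Gamma (z + x)) z =
      (-1) ^ (m + 2) * (m + 1).factorial *
        ∑' j : ℕ, ((j : ℝ) + 1) * bc x (j + 1) / (z + j) ^ (m + 2) := by
  have hA0 : 0 ≤ A := by
    have := (abs_nonneg _).trans (hA 0)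
    exact nonneg_of_mul_nonneg_left this (wt_pos 0)
  have sP : ∀ p : ℕ, Summable fun j : ℕ => |bc x j| / ((j : ℝ) + 1) ^ (p + 1) := fun p =>
    ((summable_wt (Nat.le_add_left 1 p)).mul_left A).of_nonneg_of_le (fun j => by positivity)
      fun j => by
        rw [← mul_div_assoc]
        exact div_le_div_of_nonneg_right (hA j) (by positivity)
  have sV : ∀ p : ℕ, Summable fun j : ℕ =>
      |((j : ℝ) + 1) * bc x (j + 1)| / ((j : ℝ) + 1) ^ (p + 2) := fun p =>
    ((summable_wt (Nat.le_add_left 1 p)).mul_left A).of_nonneg_of_le (fun j => by positivity)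
      fun j => by
        have h1 : (0 : ℝ) < (j : ℝ) + 1 := by positivity
        rw [abs_mul, abs_of_pos h1, pow_succ ((j : ℝ) + 1) (p + 1),
          mul_comm (((j : ℝ) + 1) ^ (p + 1)), mul_div_mul_left _ _ h1.ne', ← mul_div_assoc]
        refine div_le_div_of_nonneg_right ((hA (j + 1)).trans ?_) (by positivity)
        exact mul_le_mul_of_nonneg_left (wt_anti (Nat.le_succ j)) hA0
  have hcmp : ∀ w : ℝ, 1 / 2 < w → ∀ p : ℕ,
      Summable fun j : ℕ => |bc x j| / (w + j) ^ (p + 1) := fun w hw p => by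
    refine ((sP p).mul_left (2 ^ (p + 1))).of_nonneg_of_le (fun j => by positivity) fun j => ?_
    have h1 : (0 : ℝ) < (j : ℝ) + 1 := by positivity
    have hj : (0 : ℝ) ≤ j := by positivity
    rw [mul_div_assoc', div_le_div_iff₀ (by positivity) (by positivity)]
    have h3 : ((j : ℝ) + 1) ^ (p + 1) ≤ (2 * (w + j)) ^ (p + 1) := by
      gcongr; linarith
    rw [mul_pow] at h3
    calc |bc x j| * ((j : ℝ) + 1) ^ (p + 1) ≤ |bc x j| * (2 ^ (p + 1) * (w + j) ^ (p + 1)) := by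
          gcongr
      _ = _ := by ring
  have hF : ∀ w : ℝ, 1 / 2 < w → Real.Gamma (x + 1) * Real.Gamma w / Real.Gamma (w + x) =
      (w + x) * ∑' j : ℕ, bc x j / (w + j) ^ 1 := by
    intro w hw
    have hpos : 0 < w + x := by linarith
    have := beta_hasSum (x := x) (by linarith) (z := w) (by linarith)
      ((hcmp w hw 0).congr fun j => by rw [zero_add, pow_one, add_comm])
    simp only [pow_one]
    rw [this.tsum_eq, ← add_assoc, Real.Gamma_add_one hpos.ne']
    have := (Real.Gamma_pos_of_pos hpos).ne'
    field_simp
  induction m generalizing z with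
  | zero =>
    have hev : (fun z : ℝ => Real.Gamma (x + 1) * Real.Gamma z / Real.Gamma (z + x)) =ᶠ[nhds z]
        fun w => (w + x) * ∑' j : ℕ, bc x j / (w + j) ^ 1 := by
      filter_upwards [Ioi_mem_nhds hz] with w hw using hF w hw
    rw [zero_add, iteratedDeriv_one, hev.deriv_eq]
    have hd := ((hasDerivAt_id z).add_const x).mul (hasDerivAt_tsum_pow (p := 1) (sP 0) hz)
    have hd' : deriv (fun w => (w + x) * ∑' j : ℕ, bc x j / (w + j) ^ 1) z = _ := hd.deriv
    rw [hd']
    simp only [id, Nat.cast_one, neg_mul, one_mul, mul_neg]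
    have s1 : Summable fun j : ℕ => bc x j / (z + j) ^ 1 :=
      Summable.of_norm ((hcmp z hz 0).congr fun j => by
        rw [norm_div, norm_pow, Real.norm_eq_abs, Real.norm_eq_abs,
          abs_of_pos (by positivity : 0 < z + j)])
    have s2 : Summable fun j : ℕ => bc x j / (z + j) ^ 2 :=
      Summable.of_norm ((hcmp z hz 1).congr fun j => by
        rw [norm_div, norm_pow, Real.norm_eq_abs, Real.norm_eq_abs,
          abs_of_pos (by positivity : 0 < z + j)])
    rw [← tsum_mul_left, ← tsum_neg, ← s1.tsum_add (s2.mul_left _).neg]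
    simp only [zero_add, Nat.factorial_one, Nat.cast_one, mul_one, even_two, Even.neg_pow,
      one_pow, one_mul]
    refine tsum_congr fun j => ?_
    have hpos : z + j ≠ 0 := by positivity
    have hj : (j : ℝ) + 1 ≠ 0 := by positivity
    rw [bc]
    field_simp
    ring
  | succ m ih =>
    have hev : iteratedDeriv (m + 1)
        (fun z : ℝ => Real.Gamma (x + 1) * Real.Gamma z / Real.Gamma (z + x)) =ᶠ[nhds z]
        fun w => (-1) ^ (m + 2) * (m + 1).factorial *
          ∑' j : ℕ, ((j : ℝ) + 1) * bc x (j + 1) / (w + j) ^ (m + 2) := by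
      filter_upwards [Ioi_mem_nhds hz] with w hw using ih hw
    rw [iteratedDeriv_succ, hev.deriv_eq,
      ((hasDerivAt_tsum_pow (sV m) hz).const_mul _).deriv, Nat.factorial_succ (m + 1)]
    push_cast
    ring

/-! ### Differentiation in `x` -/

lemma near {n : ℕ} {x : ℝ} (hx : x ∈ Set.Ioo ((n : ℝ) - 1 / 8) (n + 1 / 8)) : |x - n| ≤ 1 / 8 :=
  abs_le.2 ⟨by linarith [hx.1], by linarith [hx.2]⟩

/-- Termwise differentiation in `x`, applied to `(f, f') = (bc, bc1)` and `(bc1, bc2)`. -/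
lemma hasDerivAt_tsum_near {n m : ℕ} (hm : 1 ≤ m) {f f' : ℝ → ℕ → ℝ} {A B : ℝ}
    (hf : ∀ j x, HasDerivAt (fun y => f y j) (f' x j) x)
    (hA : ∀ (j : ℕ) (x : ℝ), |x - n| ≤ 1 / 8 → |f x j| ≤ A * wt j) (hB0 : 0 ≤ B) (hA0 : 0 ≤ A)
    (hB : ∀ (j : ℕ) (x : ℝ), |x - n| ≤ 1 / 8 → |f' x j| ≤ B * wt j)
    {x : ℝ} (hx : x ∈ Set.Ioo ((n : ℝ) - 1 / 8) (n + 1 / 8)) :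
    HasDerivAt (fun y => ∑' j : ℕ, f y (j + 1) / ((j : ℝ) + 1) ^ m)
      (∑' j : ℕ, f' x (j + 1) / ((j : ℝ) + 1) ^ m) x := by
  have bd : ∀ (C c : ℝ) (j : ℕ), 0 ≤ C → |c| ≤ C * wt (j + 1) →
      ‖c / ((j : ℝ) + 1) ^ m‖ ≤ C * (wt j / ((j : ℝ) + 1) ^ m) := by
    intro C c j hC hc
    rw [norm_div, Real.norm_eq_abs, Real.norm_eq_abs,
      abs_of_pos (by positivity : (0 : ℝ) < ((j : ℝ) + 1) ^ m), ← mul_div_assoc]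
    refine div_le_div_of_nonneg_right (hc.trans ?_) (by positivity)
    exact mul_le_mul_of_nonneg_left (wt_anti (Nat.le_succ j)) hC
  refine hasDerivAt_tsum_of_isPreconnected
    (g := fun (j : ℕ) (y : ℝ) => f y (j + 1) / ((j : ℝ) + 1) ^ m)
    (g' := fun (j : ℕ) (y : ℝ) => f' y (j + 1) / ((j : ℝ) + 1) ^ m)
    ((summable_wt hm).mul_left B) isOpen_Ioo isPreconnected_Ioo
    (fun j y _ => (hf (j + 1) y).div_const _)
    (fun j y hy => bd B _ j hB0 (hB _ _ (near hy))) hx ?_ hx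
  exact Summable.of_norm_bounded ((summable_wt hm).mul_left A)
    fun j => bd A _ j hA0 (hA _ _ (near hx))

lemma summable_near {m : ℕ} (hm : 1 ≤ m) {c : ℕ → ℝ} {C : ℝ} (hC : 0 ≤ C)
    (hc : ∀ j, |c j| ≤ C * wt j) : Summable fun j : ℕ => c (j + 1) / ((j : ℝ) + 1) ^ m := by
  refine Summable.of_norm_bounded ((summable_wt hm).mul_left C) fun j => ?_
  rw [norm_div, Real.norm_eq_abs, Real.norm_eq_abs,
    abs_of_pos (by positivity : (0 : ℝ) < ((j : ℝ) + 1) ^ m), ← mul_div_assoc]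
  refine div_le_div_of_nonneg_right ((hc _).trans ?_) (by positivity)
  exact mul_le_mul_of_nonneg_left (wt_anti (Nat.le_succ j)) hC

/-! ### The identity -/

/-- For integers `m ≥ 1` and `n ≥ 0`,
`∑_{k=0}^∞ H_k/((n+k+1)^(m+1)·C(n+k,k))
 = ((-1)^n/2)·∑_{k=1}^n (-1)^(k-1)/k^m·C(n,k)·(H_{n−k}² + H_{n−k}^{(2)} − H_n^{(2)} − H_n²)
   − ((-1)^(m+n)/(2·m!))·D₂ + ((-1)^(m+n)·H_n/m!)·D₁`,
where `D_a` is the `a`-th derivative at `x = n` of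
`x ↦ (d^m/dz^m)[Γ(x+1)Γ(z)/Γ(z+x)]|_{z=1}`. -/
theorem sum_harmonic_binom_eq (m n : ℕ) (hm : 1 ≤ m) :
    (∑' k : ℕ, H k / ((n + k + 1 : ℝ) ^ (m + 1) * (Nat.choose (n + k) k : ℝ))) =
      (-1 : ℝ) ^ n / 2 *
        (∑ k ∈ Finset.Icc 1 n, (-1 : ℝ) ^ (k + 1) / (k : ℝ) ^ m * (Nat.choose n k : ℝ) *
          (H (n - k) ^ 2 + H2 (n - k) - H2 n - H n ^ 2)) -
      (-1 : ℝ) ^ (m + n) / (2 * Nat.factorial m) *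
        iteratedDeriv 2
          (fun x : ℝ =>
            iteratedDeriv m
              (fun z : ℝ => Real.Gamma (x + 1) * Real.Gamma z / Real.Gamma (z + x)) 1)
          (n : ℝ) +
      (-1 : ℝ) ^ (m + n) * H n / Nat.factorial m *
        deriv
          (fun x : ℝ =>
            iteratedDeriv m
              (fun z : ℝ => Real.Gamma (x + 1) * Real.Gamma z / Real.Gamma (z + x)) 1)
          (n : ℝ) := by
  obtain ⟨A, hA0, hA⟩ := exists_bound n
  set G : ℝ → ℝ := fun x : ℝ => iteratedDeriv m
    (fun z : ℝ => Real.Gamma (x + 1) * Real.Gamma z / Real.Gamma (z + x)) 1 with hG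
  set c : ℝ := (-1) ^ (m + 1) * m.factorial with hc
  have hn0 : (0 : ℝ) ≤ n := by positivity
  -- `G` and its derivatives as series in `j + 1 ≥ 1`
  have hG0 : ∀ x ∈ Set.Ioo ((n : ℝ) - 1 / 8) (n + 1 / 8),
      G x = c * ∑' j : ℕ, bc x (j + 1) / ((j : ℝ) + 1) ^ m := by
    intro x hx
    obtain ⟨p, rfl⟩ : ∃ p, m = p + 1 := ⟨m - 1, by omega⟩
    rw [hG, hc]
    simp only
    rw [iteratedDeriv_gamma (by linarith [hx.1]) (fun j => (hA j x (near hx)).1) p (by norm_num)]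
    congr 1
    refine tsum_congr fun j => ?_
    have h1 : (j : ℝ) + 1 ≠ 0 := by positivity
    rw [add_comm (1 : ℝ), pow_succ ((j : ℝ) + 1) (p + 1), mul_comm (((j : ℝ) + 1) ^ (p + 1)),
      mul_div_mul_left _ _ h1]
  have hG1 : ∀ x ∈ Set.Ioo ((n : ℝ) - 1 / 8) (n + 1 / 8),
      deriv G x = c * ∑' j : ℕ, bc1 x (j + 1) / ((j : ℝ) + 1) ^ m := by
    intro x hx
    have hev : G =ᶠ[nhds x] fun y => c * ∑' j : ℕ, bc y (j + 1) / ((j : ℝ) + 1) ^ m := by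
      filter_upwards [Ioo_mem_nhds hx.1 hx.2] with y hy using hG0 y hy
    rw [hev.deriv_eq]
    exact ((hasDerivAt_tsum_near hm hasDerivAt_bc (fun j x hx => (hA j x hx).1) (by positivity)
      hA0 (fun j x hx => (hA j x hx).2.1) hx).const_mul c).deriv
  have hnn : (n : ℝ) ∈ Set.Ioo ((n : ℝ) - 1 / 8) (n + 1 / 8) := by constructor <;> linarith
  have hG2 : iteratedDeriv 2 G n = c * ∑' j : ℕ, bc2 n (j + 1) / ((j : ℝ) + 1) ^ m := by
    have hev : deriv G =ᶠ[nhds (n : ℝ)]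
        fun y => c * ∑' j : ℕ, bc1 y (j + 1) / ((j : ℝ) + 1) ^ m := by
      filter_upwards [Ioo_mem_nhds hnn.1 hnn.2] with y hy using hG1 y hy
    rw [iteratedDeriv_succ, iteratedDeriv_one, hev.deriv_eq]
    exact ((hasDerivAt_tsum_near hm hasDerivAt_bc1 (fun j x hx => (hA j x hx).2.1) (by positivity)
      (by positivity) (fun j x hx => (hA j x hx).2.2) hnn).const_mul c).deriv
  have s1 : Summable fun j : ℕ => bc1 n (j + 1) / ((j : ℝ) + 1) ^ m :=
    summable_near hm (by positivity) fun j => (hA j n (near hnn)).2.1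
  have s2 : Summable fun j : ℕ => bc2 n (j + 1) / ((j : ℝ) + 1) ^ m :=
    summable_near hm (by positivity) fun j => (hA j n (near hnn)).2.2
  have sE := (s1.mul_left (H n)).sub (s2.mul_left (1 / 2))
  -- the combination `H_n G' - G''/2` without its factor `c`, split after the index `n`
  have hE := (s1.mul_left (H n)).tsum_sub (s2.mul_left (1 / 2))
  rw [tsum_mul_left, tsum_mul_left, ← sE.sum_add_tsum_nat_add n] at hE
  have hfin : ∑ i ∈ Finset.range n, (H n * (bc1 n (i + 1) / ((i : ℝ) + 1) ^ m) -
        1 / 2 * (bc2 n (i + 1) / ((i : ℝ) + 1) ^ m)) =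
      1 / 2 * ∑ k ∈ Finset.Icc 1 n, (-1 : ℝ) ^ (k + 1) / (k : ℝ) ^ m * (Nat.choose n k : ℝ) *
          (H (n - k) ^ 2 + H2 (n - k) - H2 n - H n ^ 2) := by
    have hI : Finset.Icc 1 n = Finset.Ico (0 + 1) (n + 1) := by
      ext i; simp only [Finset.mem_Icc, Finset.mem_Ico]; omega
    rw [Finset.mul_sum, Finset.range_eq_Ico, hI, ← Finset.sum_Ico_add']
    refine Finset.sum_congr rfl fun i hi => ?_
    have hin : i + 1 ≤ n := (Finset.mem_Ico.1 hi).2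
    obtain ⟨-, h1, h2⟩ := bc_nat_le (n - (i + 1)) (i + 1)
    rw [Nat.sub_add_cancel hin] at h1 h2
    rw [h1, h2, pow_succ (-1 : ℝ) (i + 1)]
    push_cast
    ring
  have htail : ∑' k : ℕ, (H n * (bc1 n (k + n + 1) / (((k + n : ℕ) : ℝ) + 1) ^ m) -
        1 / 2 * (bc2 n (k + n + 1) / (((k + n : ℕ) : ℝ) + 1) ^ m)) =
      (-1) ^ (n + 1) *
        ∑' k : ℕ, H k / ((n + k + 1 : ℝ) ^ (m + 1) * (Nat.choose (n + k) k : ℝ)) := by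
    rw [← tsum_mul_left]
    refine tsum_congr fun k => ?_
    obtain ⟨-, h1, h2⟩ := bc_nat_gt n k
    have hC : ((n + k).choose k : ℝ) ≠ 0 := by
      exact_mod_cast (Nat.choose_pos (Nat.le_add_left k n)).ne'
    have hnk : (n : ℝ) + k + 1 ≠ 0 := by positivity
    rw [add_comm k n, h1, h2]
    push_cast
    field_simp
    ring
  rw [hfin, htail] at hE
  rw [hG2, hG1 n hnn, hc]
  have hsq : ∀ k : ℕ, ((-1 : ℝ) ^ k) * (-1) ^ k = 1 := fun k => by
    rw [← mul_pow]; norm_num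
  have hf : (m.factorial : ℝ) ≠ 0 := by positivity
  have k1 : (-1 : ℝ) ^ (m + n) / (2 * m.factorial) *
      ((-1) ^ (m + 1) * m.factorial * ∑' j : ℕ, bc2 n (j + 1) / ((j : ℝ) + 1) ^ m) =
      -((-1 : ℝ) ^ n / 2 * ∑' j : ℕ, bc2 n (j + 1) / ((j : ℝ) + 1) ^ m) := by
    rw [pow_add, pow_add]
    field_simp
    linear_combination (-∑' j : ℕ, bc2 n (j + 1) / ((j : ℝ) + 1) ^ m) * hsq m
  have k2 : (-1 : ℝ) ^ (m + n) * H n / m.factorial *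
      ((-1) ^ (m + 1) * m.factorial * ∑' j : ℕ, bc1 n (j + 1) / ((j : ℝ) + 1) ^ m) =
      -((-1 : ℝ) ^ n * H n * ∑' j : ℕ, bc1 n (j + 1) / ((j : ℝ) + 1) ^ m) := by
    rw [pow_add, pow_add]
    field_simp
    linear_combination (-H n * ∑' j : ℕ, bc1 n (j + 1) / ((j : ℝ) + 1) ^ m) * hsq m
  rw [k1, k2]
  rw [pow_succ (-1 : ℝ) n] at hE
  linear_combination (-(-1 : ℝ) ^ n) * hE -
    (∑' k : ℕ, H k / ((n + k + 1 : ℝ) ^ (m + 1) * (Nat.choose (n + k) k : ℝ))) * hsq n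
end

section
/- Let m ≥ 2 be an integer. Then 2·∑_{k=1}^∞ H_k/(k+1)^m = m·ζ(m+1) − ∑_{k=1}^{m−2} ζ(k+1)·ζ(m−k). -/
/-- The Riemann zeta function at integer arguments, `ζ(s) = ∑_{n=1}^∞ 1/n^s`. -/
noncomputable def zeta (s : ℕ) : ℝ := ∑' n : ℕ, (1 : ℝ) / (n + 1) ^ s

open Finset Filter Topology

lemma zeta_hasSum {s : ℕ} (hs : 2 ≤ s) :
    HasSum (fun n : ℕ => (1 : ℝ) / (n + 1) ^ s) (zeta s) := by
  have h := (summable_nat_add_iff 1).2 (Real.summable_one_div_nat_pow.2 (show 1 < s by omega))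
  push_cast at h
  exact h.hasSum

/-- The first off-diagonal term, at the integers `a + 1` and `b = (a + 1) + (d + 1)`. -/
noncomputable def lowTerm (p : ℕ) (z : ℕ × ℕ) : ℝ :=
  1 / ((z.1 + 1) ^ (p + 1) * (z.1 + z.2 + 2) * (z.2 + 1))

/-- The second off-diagonal term, at the integers `a + 1` and `b = (a + 1) + (d + 1)`. -/
noncomputable def highTerm (p : ℕ) (z : ℕ × ℕ) : ℝ :=
  1 / ((z.1 + 1) * (z.1 + z.2 + 2) ^ (p + 1) * (z.2 + 1))

lemma summable_lowTerm (p : ℕ) : Summable (lowTerm p) := by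
  have h1 : Summable (fun n : ℕ => (1 : ℝ) / ((n : ℝ) + 1) ^ (3 / 2 : ℝ)) := by
    have h := (summable_nat_add_iff 1).2
      (Real.summable_one_div_nat_rpow.2 (show (1 : ℝ) < 3 / 2 by norm_num))
    push_cast at h
    exact h
  have h2 := h1.mul_of_nonneg h1 (fun n => by positivity) (fun n => by positivity)
  refine Summable.of_nonneg_of_le (fun z => ?_) (fun z => ?_) h2
  · unfold lowTerm; positivity
  · obtain ⟨a, d⟩ := z
    unfold lowTerm
    have key : ∀ t : ℝ, 0 < t → t ^ (3 / 2 : ℝ) = t * √t := fun t ht => by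
      rw [Real.sqrt_eq_rpow, show (3 / 2 : ℝ) = 1 + 1 / 2 by norm_num, Real.rpow_add ht,
        Real.rpow_one]
    have ha : (0 : ℝ) < a + 1 := by positivity
    have hd : (0 : ℝ) < d + 1 := by positivity
    rw [div_mul_div_comm, one_mul, key _ ha, key _ hd]
    apply one_div_le_one_div_of_le (by positivity)
    have h3 : (a + 1 : ℝ) ≤ (a + 1) ^ (p + 1) :=
      le_self_pow₀ (by linarith [a.cast_nonneg (α := ℝ)]) (by omega)
    have h4 : √(a + 1 : ℝ) * √(d + 1 : ℝ) ≤ a + d + 2 := by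
      nlinarith [sq_nonneg (√(a + 1 : ℝ) - √(d + 1 : ℝ)), Real.sq_sqrt ha.le, Real.sq_sqrt hd.le]
    calc (a + 1 : ℝ) * √(a + 1) * ((d + 1) * √(d + 1))
        = (a + 1) * (√(a + 1) * √(d + 1)) * (d + 1) := by ring
      _ ≤ (a + 1) ^ (p + 1) * (a + d + 2) * (d + 1) := by gcongr

lemma summable_highTerm (p : ℕ) : Summable (highTerm p) := by
  refine Summable.of_nonneg_of_le (fun z => ?_) (fun z => ?_) (summable_lowTerm p)
  · unfold highTerm; positivity
  · obtain ⟨a, d⟩ := z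
    unfold highTerm lowTerm
    apply one_div_le_one_div_of_le (by positivity)
    have h : (a + 1 : ℝ) ^ p ≤ (a + d + 2) ^ p := by
      gcongr ?_ ^ p
      linarith [d.cast_nonneg (α := ℝ)]
    calc (a + 1 : ℝ) ^ (p + 1) * (a + d + 2) * (d + 1)
        = (a + 1) * ((a + 1) ^ p * (a + d + 2)) * (d + 1) := by ring
      _ ≤ (a + 1) * ((a + d + 2) ^ p * (a + d + 2)) * (d + 1) := by gcongr
      _ = (a + 1) * (a + d + 2) ^ (p + 1) * (d + 1) := by ring

/-- Both sides are `H n + H N - H (n + N)`. -/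
lemma sum_sub_shift (n N : ℕ) :
    ∑ d ∈ range n, ((1 : ℝ) / (d + 1) - 1 / (N + d + 1)) =
      ∑ i ∈ range N, ((1 : ℝ) / (i + 1) - 1 / (n + i + 1)) := by
  have h1 := sum_range_add (fun i : ℕ => (1 : ℝ) / (i + 1)) n N
  have h2 := sum_range_add (fun i : ℕ => (1 : ℝ) / (i + 1)) N n
  rw [add_comm N n] at h2
  push_cast at h1 h2
  rw [sum_sub_distrib, sum_sub_distrib]
  linarith

lemma hasSum_telescope (N : ℕ) :
    HasSum (fun d : ℕ => (1 : ℝ) / (d + 1) - 1 / (N + d + 1)) (H N) := by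
  rw [hasSum_iff_tendsto_nat_of_nonneg]
  · refine Tendsto.congr (fun n => (sum_sub_shift n N).symm) ?_
    unfold H
    refine tendsto_finsetSum _ fun i _ => ?_
    have h := (tendsto_one_div_add_atTop_nhds_zero_nat (𝕜 := ℝ)).comp (tendsto_add_atTop_nat i)
    have h' := h.const_sub ((1 : ℝ) / (i + 1))
    simpa [Function.comp_def] using h'
  · intro d
    rw [sub_nonneg]
    apply one_div_le_one_div_of_le (by positivity)
    linarith [N.cast_nonneg (α := ℝ)]

lemma hasSum_lowTerm_fiber (p a : ℕ) :
    HasSum (fun d : ℕ => lowTerm p (a, d)) (H (a + 1) / (a + 1 : ℝ) ^ (p + 2)) := by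
  refine ((hasSum_telescope (a + 1)).div_const ((a + 1 : ℝ) ^ (p + 2))).congr_fun fun d => ?_
  unfold lowTerm
  have h1 : (a + 1 : ℝ) ≠ 0 := by positivity
  have h2 : (d + 1 : ℝ) ≠ 0 := by positivity
  have h3 : (a + d + 2 : ℝ) ≠ 0 := by positivity
  have h4 : (a + 1 + d + 1 : ℝ) ≠ 0 := by positivity
  push_cast
  field_simp
  ring

lemma sum_antidiagonal_highTerm (p n : ℕ) :
    ∑ z ∈ antidiagonal n, highTerm p z = 2 * (H (n + 1) / (n + 2 : ℝ) ^ (p + 2)) := by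
  have h1 : ∀ z ∈ antidiagonal n, highTerm p z =
      ((1 : ℝ) / (z.1 + 1) + 1 / (z.2 + 1)) / (n + 2 : ℝ) ^ (p + 2) := by
    rintro ⟨a, d⟩ hz
    rw [HasAntidiagonal.mem_antidiagonal] at hz
    subst hz
    have h1 : (a + 1 : ℝ) ≠ 0 := by positivity
    have h2 : (d + 1 : ℝ) ≠ 0 := by positivity
    have h3 : (a + d + 2 : ℝ) ≠ 0 := by positivity
    unfold highTerm
    push_cast
    field_simp
    ring
  have h2 : ∑ z ∈ antidiagonal n, (1 : ℝ) / (z.1 + 1) = H (n + 1) := by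
    rw [Nat.sum_antidiagonal_eq_sum_range_succ (fun i _ => (1 : ℝ) / (i + 1)), H]
  have h3 : ∑ z ∈ antidiagonal n, (1 : ℝ) / (z.2 + 1) = H (n + 1) := by
    rw [← h2, ← Nat.sum_antidiagonal_swap]
    rfl
  rw [sum_congr rfl h1, ← sum_div, sum_add_distrib, h2, h3]
  ring

lemma hasSum_harmonic (p : ℕ) :
    HasSum (fun n : ℕ => 2 * (H (n + 1) / (n + 2 : ℝ) ^ (p + 2))) (∑' z, highTerm p z) := by
  have h := (HasAntidiagonal.sigmaAntidiagonalEquivProd (A := ℕ)).hasSum_iff.2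
    (summable_highTerm p).hasSum
  refine h.sigma fun n => ?_
  rw [← sum_antidiagonal_highTerm, ← sum_coe_sort]
  exact hasSum_fintype _

lemma tsum_highTerm (p : ℕ) :
    ∑' z, highTerm p z = 2 * ∑' n : ℕ, H (n + 1) / (n + 2 : ℝ) ^ (p + 2) := by
  rw [← tsum_mul_left, (hasSum_harmonic p).tsum_eq]

lemma tsum_lowTerm (p : ℕ) :
    ∑' z, lowTerm p z = (∑' n : ℕ, H (n + 1) / (n + 2 : ℝ) ^ (p + 2)) + zeta (p + 3) := by
  have h1 := (summable_lowTerm p).hasSum.prod_fiberwise (hasSum_lowTerm_fiber p)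
  have hs : Summable (fun n : ℕ => H (n + 1) / (n + 2 : ℝ) ^ (p + 2)) :=
    (summable_mul_left_iff two_ne_zero).1 (hasSum_harmonic p).summable
  have h2 : HasSum (fun n : ℕ => H n / (n + 1 : ℝ) ^ (p + 2))
      (∑' n : ℕ, H (n + 1) / (n + 2 : ℝ) ^ (p + 2)) := by
    rw [← hasSum_nat_add_iff' 1]
    have hH : ∑ i ∈ range 1, H i / (i + 1 : ℝ) ^ (p + 2) = 0 := by simp [H]
    rw [hH, sub_zero]
    refine hs.hasSum.congr_fun fun n => ?_
    rw [Nat.cast_succ, add_assoc, one_add_one_eq_two]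
  refine h1.unique ?_
  refine (h2.add (zeta_hasSum (s := p + 3) (by omega))).congr_fun fun n => ?_
  rw [H, sum_range_succ, ← H]
  have : (n + 1 : ℝ) ≠ 0 := by positivity
  field_simp
  ring

/-- The symmetric kernel `∑_{k=1}^{p} x ^ (k + 1) * y ^ (p + 2 - k)`, at `x = 1 / (a + 1)` and
`y = 1 / (b + 1)`. -/
noncomputable def kernel (p : ℕ) (z : ℕ × ℕ) : ℝ :=
  ∑ k ∈ Icc 1 p, (1 : ℝ) / (z.1 + 1) ^ (k + 1) * (1 / (z.2 + 1) ^ (p + 2 - k))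

lemma kernel_eq (p : ℕ) (z : ℕ × ℕ) :
    kernel p z = (1 / (z.1 + 1 : ℝ)) ^ 2 * (1 / (z.2 + 1 : ℝ)) ^ 2 *
      ∑ j ∈ range p, (1 / (z.1 + 1 : ℝ)) ^ j * (1 / (z.2 + 1 : ℝ)) ^ (p - 1 - j) := by
  have hI : Icc 1 p = Ico 1 (p + 1) := by ext; simp
  rw [kernel, hI, sum_Ico_eq_sum_range, mul_sum, Nat.add_sub_cancel]
  refine sum_congr rfl fun j hj => ?_
  rw [mem_range] at hj
  rw [show 1 + j + 1 = 2 + j by omega, show p + 2 - (1 + j) = 2 + (p - 1 - j) by omega,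
    ← one_div_pow, ← one_div_pow, pow_add, pow_add]
  ring

lemma kernel_swap (p a b : ℕ) : kernel p (a, b) = kernel p (b, a) := by
  rw [kernel_eq, kernel_eq, geom_sum₂_comm]
  ring

lemma kernel_diag (p a : ℕ) : kernel p (a, a) = p * (1 / (a + 1 : ℝ) ^ (p + 3)) := by
  rw [kernel]
  have h : ∀ k ∈ Icc 1 p, (1 : ℝ) / (a + 1) ^ (k + 1) * (1 / (a + 1) ^ (p + 2 - k)) =
      1 / (a + 1 : ℝ) ^ (p + 3) := fun k hk => by
    rw [mem_Icc] at hk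
    rw [div_mul_div_comm, one_mul, ← pow_add, show k + 1 + (p + 2 - k) = p + 3 by omega]
  rw [sum_congr rfl h]
  simp

lemma kernel_offdiag (p a d : ℕ) :
    kernel p (a, a + d + 1) = lowTerm p (a, d) - highTerm p (a, d) := by
  have h1 : (a + 1 : ℝ) ≠ 0 := by positivity
  have h2 : (d + 1 : ℝ) ≠ 0 := by positivity
  have h3 : (a + d + 2 : ℝ) ≠ 0 := by positivity
  have hg := geom_sum₂_mul (1 / (a + 1 : ℝ)) (1 / (a + d + 2 : ℝ)) p
  have hxy : 1 / (a + 1 : ℝ) - 1 / (a + d + 2 : ℝ) = (d + 1) / ((a + 1) * (a + d + 2)) := by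
    field_simp
    ring
  rw [hxy, ← eq_div_iff (by positivity)] at hg
  rw [kernel_eq]
  push_cast
  rw [show (a + d + 1 + 1 : ℝ) = a + d + 2 by ring, hg]
  unfold lowTerm highTerm
  simp only [one_div_pow]
  field_simp
  ring

lemma hasSum_kernel (p : ℕ) :
    HasSum (kernel p) (∑ k ∈ Icc 1 p, zeta (k + 1) * zeta (p + 2 - k)) := by
  refine hasSum_sum fun k hk => ?_
  rw [mem_Icc] at hk
  have h1 := zeta_hasSum (s := k + 1) (by omega)
  have h2 := zeta_hasSum (s := p + 2 - k) (by omega)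
  exact h1.mul h2 (h1.summable.mul_of_nonneg h2.summable
    (fun n => by positivity) (fun n => by positivity))

/-- A sum over pairs splits into the diagonal and the two regions off it. -/
lemma hasSum_split {F : ℕ × ℕ → ℝ} {s t u : ℝ} (h0 : HasSum (fun a => F (a, a)) s)
    (h1 : HasSum (fun z : ℕ × ℕ => F (z.1, z.1 + z.2 + 1)) t)
    (h2 : HasSum (fun z : ℕ × ℕ => F (z.1 + z.2 + 1, z.1)) u) :
    HasSum F (s + t + u) := by
  have e0 : HasSum (fun z : ℕ × ℕ => if z.1 = z.2 then F z else 0) s := by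
    have hi : Function.Injective (fun a : ℕ => (a, a)) := fun a b h => (Prod.ext_iff.1 h).1
    refine (hi.hasSum_iff ?_).1 (by simpa [Function.comp_def] using h0)
    rintro ⟨a, b⟩ hz
    exact if_neg fun h : a = b => hz ⟨a, by simp [h]⟩
  have e1 : HasSum (fun z : ℕ × ℕ => if z.1 < z.2 then F z else 0) t := by
    have hi : Function.Injective (fun z : ℕ × ℕ => (z.1, z.1 + z.2 + 1)) := by
      rintro ⟨a, b⟩ ⟨c, d⟩ h
      simp only [Prod.mk.injEq] at h ⊢
      omega
    refine (hi.hasSum_iff ?_).1 ?_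
    · rintro ⟨a, b⟩ hz
      refine if_neg fun h : a < b => hz ⟨(a, b - a - 1), ?_⟩
      simp only [Prod.mk.injEq, true_and]
      omega
    · convert h1 using 2 with z
      exact if_pos (show z.1 < z.1 + z.2 + 1 by omega)
  have e2 : HasSum (fun z : ℕ × ℕ => if z.2 < z.1 then F z else 0) u := by
    have hi : Function.Injective (fun z : ℕ × ℕ => (z.1 + z.2 + 1, z.1)) := by
      rintro ⟨a, b⟩ ⟨c, d⟩ h
      simp only [Prod.mk.injEq] at h ⊢
      omega
    refine (hi.hasSum_iff ?_).1 ?_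
    · rintro ⟨a, b⟩ hz
      refine if_neg fun h : b < a => hz ⟨(b, a - b - 1), ?_⟩
      simp only [Prod.mk.injEq, and_true]
      omega
    · convert h2 using 2 with z
      exact if_pos (show z.1 < z.1 + z.2 + 1 by omega)
  convert (e0.add e1).add e2 using 2 with z
  rcases lt_trichotomy z.1 z.2 with h | h | h
  · simp [h, h.ne, h.not_gt]
  · simp [h]
  · simp [h, h.ne', h.not_gt]

/-- Euler's classical formula: for an integer `m ≥ 2`,
`2·∑_{k=1}^∞ H_k/(k+1)^m = m·ζ(m+1) − ∑_{k=1}^{m−2} ζ(k+1)·ζ(m−k)`. -/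
theorem euler_sum_formula (m : ℕ) (hm : 2 ≤ m) :
    2 * (∑' k : ℕ, H (k + 1) / (k + 2 : ℝ) ^ m) =
      m * zeta (m + 1) - ∑ k ∈ Finset.Icc 1 (m - 2), zeta (k + 1) * zeta (m - k) := by
  obtain ⟨p, rfl⟩ := Nat.exists_eq_add_of_le' hm
  have hd : HasSum (fun a => kernel p (a, a)) (p * zeta (p + 3)) := by
    simp_rw [kernel_diag]
    exact (zeta_hasSum (by omega)).mul_left _
  have ho : HasSum (fun z : ℕ × ℕ => kernel p (z.1, z.1 + z.2 + 1))
      (∑' z, lowTerm p z - ∑' z, highTerm p z) := by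
    simp_rw [kernel_offdiag]
    exact (summable_lowTerm p).hasSum.sub (summable_highTerm p).hasSum
  have ho' : HasSum (fun z : ℕ × ℕ => kernel p (z.1 + z.2 + 1, z.1))
      (∑' z, lowTerm p z - ∑' z, highTerm p z) := by
    convert ho using 2 with z
    exact kernel_swap _ _ _
  have h := (hasSum_kernel p).unique (hasSum_split hd ho ho')
  rw [tsum_lowTerm, tsum_highTerm] at h
  rw [Nat.add_sub_cancel, h]
  push_cast
  ring
end
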